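/- arXiv:1001.2451 — 4 statements merged into one kernel-verified Lean document; each statement's English description precedes it below -/
import Mathlib

section
/- Let n = 2(ñ+γ) with ñ ∈ ℕ and γ ∈ {0, 1/2}, let 0 ≤ φ₁ < φ₂ < ⋯ < φ_n < 2π, and let T(φ) = ∏_{s=1}^n sin((φ−φ_s)/2) be the trigonometric nodes polynomial, which belongs to 𝒯_{ñ,γ}. For every l ∈ ℕ₀ the following are equivalent: (i) there exist real weights μ₁,…,μ_n such that (1/2π)∫₀^{2π} t(φ) dσ(φ) = Σ_{s=1}^n μ_s t(φ_s) for every t ∈ 𝒯_{ñ+2γ+l}; (ii) ∫₀^{2π} t(φ) T(φ) dσ(φ) = 0 for every t ∈ 𝒯_{l,γ}. -/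
open MeasureTheory Real

/-- `TrigPoly l γ f` : `f` belongs to the real span of
`cos((k+γ)φ)`, `sin((k+γ)φ)` for `0 ≤ k ≤ l`. -/
def TrigPoly (l : ℕ) (γ : ℝ) (f : ℝ → ℝ) : Prop :=
  ∃ a b : ℕ → ℝ, ∀ φ : ℝ,
    f φ = ∑ k ∈ Finset.range (l + 1),
      (a k * Real.cos ((k + γ) * φ) + b k * Real.sin ((k + γ) * φ))

/-!
The functional `t ↦ (1/2π) ∫ t dσ` on `𝒯_{ñ+2γ+l}` is a combination of the evaluations at the nodes
if and only if it vanishes on their common kernel. That kernel is `𝒯_{l,γ} · T`: up to the factor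
`exp(-imφ/2)`, a trigonometric polynomial of degree `m/2` is an algebraic polynomial of degree at
most `m` in `exp(iφ)`, and a zero at `θ` can be split off as the linear factor
`exp(iφ) - exp(iθ) = 2i exp(i(φ+θ)/2) sin((φ-θ)/2)`, which lowers the degree by `1/2`.
-/

lemma exists_eq_sum_mul_eval_iff {𝕜 α ι : Type*} [Field 𝕜] [Fintype ι] {E : Submodule 𝕜 (α → 𝕜)}
    (Λ : E →ₗ[𝕜] 𝕜) (x : ι → α) :
    (∃ μ : ι → 𝕜, ∀ t : E, Λ t = ∑ s, μ s * t.1 (x s)) ↔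
      ∀ t : E, (∀ s, t.1 (x s) = 0) → Λ t = 0 := by
  constructor
  · rintro ⟨μ, hμ⟩ t ht
    simp only [hμ, ht, mul_zero, Finset.sum_const_zero]
  · intro h
    let ev (s : ι) : E →ₗ[𝕜] 𝕜 := LinearMap.proj (x s) ∘ₗ E.subtype
    have hker : ⨅ s, (ev s).ker ≤ Λ.ker := fun t ht => h t ((Submodule.mem_iInf _).1 ht)
    obtain ⟨μ, hμ⟩ :=
      (Submodule.mem_span_range_iff_exists_fun 𝕜).1 (mem_span_of_iInf_ker_le_ker hker)
    refine ⟨μ, fun t => ?_⟩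
    rw [← hμ, LinearMap.sum_apply]
    rfl

section ComplexTrigSpace

open Polynomial

/-- The function `φ ↦ exp(-imφ/2) P(exp(iφ))`, through which products and zeros of trigonometric
polynomials of degree `m/2` are read off from algebraic polynomials. -/
noncomputable def halfAngleEval (m : ℕ) : ℂ[X] →ₗ[ℂ] (ℝ → ℂ) :=
  LinearMap.pi fun φ => Complex.exp (-(m / 2 * φ) * Complex.I) • leval (Complex.exp (φ * Complex.I))

/-- The complex trigonometric polynomials of degree at most `m/2`, that is, the span of the
`exp(iνφ)` with `ν ∈ {-m/2, -m/2+1, …, m/2}`. The degree is doubled so that `𝒯_{l,0}` (`m = 2l`)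
and `𝒯_{l,1/2}` (`m = 2l+1`) are treated alike. -/
noncomputable def complexTrigSpace (m : ℕ) : Submodule ℂ (ℝ → ℂ) :=
  (degreeLE ℂ m).map (halfAngleEval m)

lemma halfAngleEval_apply (m : ℕ) (P : ℂ[X]) (φ : ℝ) :
    halfAngleEval m P φ =
      Complex.exp (-(m / 2 * φ) * Complex.I) * P.eval (Complex.exp (φ * Complex.I)) := rfl

lemma halfAngleEval_X_pow (m j : ℕ) (φ : ℝ) :
    halfAngleEval m (X ^ j) φ = Complex.exp ((j - m / 2) * φ * Complex.I) := by
  rw [halfAngleEval_apply, eval_pow, eval_X, ← Complex.exp_nat_mul, ← Complex.exp_add]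
  ring_nf

lemma halfAngleEval_eq_sum {m N : ℕ} {P : ℂ[X]} (hP : P.natDegree < N) (φ : ℝ) :
    halfAngleEval m P φ =
      ∑ j ∈ Finset.range N, P.coeff j * Complex.exp ((j - m / 2) * φ * Complex.I) := by
  conv_lhs => rw [as_sum_range_C_mul_X_pow' P hP]
  simp only [← smul_eq_C_mul, map_sum, map_smul, Finset.sum_apply, Pi.smul_apply,
    halfAngleEval_X_pow, smul_eq_mul]

lemma mem_complexTrigSpace {m : ℕ} {h : ℝ → ℂ} :
    h ∈ complexTrigSpace m ↔ ∃ P : ℂ[X], P.natDegree ≤ m ∧ halfAngleEval m P = h := by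
  simp only [complexTrigSpace, Submodule.mem_map, mem_degreeLE, natDegree_le_iff_degree_le]

lemma exp_mem_complexTrigSpace {m j : ℕ} (hj : j ≤ m) :
    (fun φ : ℝ => Complex.exp ((j - m / 2) * φ * Complex.I)) ∈ complexTrigSpace m :=
  mem_complexTrigSpace.2
    ⟨X ^ j, (natDegree_X_pow_le j).trans hj, funext (halfAngleEval_X_pow m j)⟩

lemma mul_mem_complexTrigSpace {m m' : ℕ} {h h' : ℝ → ℂ} (hh : h ∈ complexTrigSpace m)
    (hh' : h' ∈ complexTrigSpace m') : h * h' ∈ complexTrigSpace (m + m') := by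
  obtain ⟨P, hP, rfl⟩ := mem_complexTrigSpace.1 hh
  obtain ⟨P', hP', rfl⟩ := mem_complexTrigSpace.1 hh'
  refine mem_complexTrigSpace.2 ⟨P * P', natDegree_mul_le_of_le hP hP', funext fun φ => ?_⟩
  have hexp : Complex.exp (-((m + m' : ℕ) / 2 * φ) * Complex.I) =
      Complex.exp (-(m / 2 * φ) * Complex.I) * Complex.exp (-(m' / 2 * φ) * Complex.I) := by
    rw [← Complex.exp_add]
    push_cast
    ring_nf
  simp only [Pi.mul_apply, halfAngleEval_apply, eval_mul, hexp]
  ring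

lemma exp_mul_I_sub_exp_mul_I (x y : ℂ) :
    Complex.exp (x * Complex.I) - Complex.exp (y * Complex.I) =
      2 * Complex.I * Complex.exp ((x + y) / 2 * Complex.I) * Complex.sin ((x - y) / 2) := by
  have hx : Complex.exp (x * Complex.I) =
      Complex.exp ((x + y) / 2 * Complex.I) * Complex.exp ((x - y) / 2 * Complex.I) := by
    rw [← Complex.exp_add]
    ring_nf
  have hy : Complex.exp (y * Complex.I) =
      Complex.exp ((x + y) / 2 * Complex.I) * Complex.exp (-((x - y) / 2) * Complex.I) := by
    rw [← Complex.exp_add]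
    ring_nf
  rw [hx, hy, Complex.sin]
  linear_combination Complex.exp ((x + y) / 2 * Complex.I) *
    (Complex.exp ((x - y) / 2 * Complex.I) - Complex.exp (-((x - y) / 2) * Complex.I)) *
      Complex.I_sq

lemma exists_eq_sin_half_mul {m : ℕ} {h : ℝ → ℂ} (hh : h ∈ complexTrigSpace (m + 1)) {θ : ℝ}
    (hθ : h θ = 0) : ∃ q ∈ complexTrigSpace m, ∀ φ, h φ = sin ((φ - θ) / 2) * q φ := by
  obtain ⟨P, hP, rfl⟩ := mem_complexTrigSpace.1 hh
  set z := Complex.exp (θ * Complex.I) with hz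
  have hroot : P.IsRoot z :=
    (mul_eq_zero.1 ((halfAngleEval_apply _ _ _).symm.trans hθ)).resolve_left (Complex.exp_ne_zero _)
  have hQ : (P /ₘ (X - C z)).natDegree ≤ m := by
    rw [natDegree_divByMonic _ (monic_X_sub_C z), natDegree_X_sub_C]
    omega
  refine ⟨(2 * Complex.I * Complex.exp (θ / 2 * Complex.I)) • halfAngleEval m (P /ₘ (X - C z)),
    Submodule.smul_mem _ _ (mem_complexTrigSpace.2 ⟨_, hQ, rfl⟩), fun φ => ?_⟩
  have hexp : Complex.exp (-((m + 1 : ℕ) / 2 * φ) * Complex.I) *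
      Complex.exp ((φ + θ) / 2 * Complex.I) =
        Complex.exp (θ / 2 * Complex.I) * Complex.exp (-(m / 2 * φ) * Complex.I) := by
    rw [← Complex.exp_add, ← Complex.exp_add]
    push_cast
    ring_nf
  conv_lhs => rw [← mul_divByMonic_eq_iff_isRoot.2 hroot]
  rw [halfAngleEval_apply, eval_mul, eval_sub, eval_X, eval_C, hz, exp_mul_I_sub_exp_mul_I,
    Pi.smul_apply, smul_eq_mul, halfAngleEval_apply]
  push_cast at hexp ⊢
  linear_combination (2 * Complex.I * Complex.sin ((φ - θ) / 2) *
    (P /ₘ (X - C z)).eval (Complex.exp (φ * Complex.I))) * hexp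

end ComplexTrigSpace

section RealTrigPoly

/-- The space `𝒯_{l,γ}` as a subspace of all real functions, the domain of the functionals in a
quadrature formula. -/
def trigSpace (l : ℕ) (γ : ℝ) : Submodule ℝ (ℝ → ℝ) where
  carrier := {f | TrigPoly l γ f}
  zero_mem' := ⟨0, 0, by simp⟩
  add_mem' := by
    rintro f g ⟨a, b, hf⟩ ⟨a', b', hg⟩
    refine ⟨a + a', b + b', fun φ => ?_⟩
    rw [Pi.add_apply, hf, hg, ← Finset.sum_add_distrib]
    exact Finset.sum_congr rfl fun k _ => by simp only [Pi.add_apply]; ring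
  smul_mem' := by
    rintro c f ⟨a, b, hf⟩
    refine ⟨c • a, c • b, fun φ => ?_⟩
    rw [Pi.smul_apply, hf, Finset.smul_sum]
    exact Finset.sum_congr rfl fun k _ => by simp only [Pi.smul_apply, smul_eq_mul]; ring

lemma TrigPoly.ofReal_mem_complexTrigSpace {l d m : ℕ} {γ : ℝ} {f : ℝ → ℝ} (hf : TrigPoly l γ f)
    (hγ : γ = d / 2) (hm : m = 2 * l + d) : (fun φ => (f φ : ℂ)) ∈ complexTrigSpace m := by
  obtain ⟨a, b, hf⟩ := hf
  have hsum : (fun φ => (f φ : ℂ)) = ∑ k ∈ Finset.range (l + 1),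
      (((a k - b k * Complex.I) / 2) •
          (fun φ : ℝ => Complex.exp (((l + d + k : ℕ) - m / 2) * φ * Complex.I)) +
        ((a k + b k * Complex.I) / 2) •
          (fun φ : ℝ => Complex.exp (((l - k : ℕ) - m / 2) * φ * Complex.I))) := by
    funext φ
    rw [hf, Complex.ofReal_sum, Finset.sum_apply]
    refine Finset.sum_congr rfl fun k hk => ?_
    have hk : k ≤ l := Finset.mem_range_succ_iff.1 hk
    have hpos : ((l + d + k : ℕ) - m / 2 : ℂ) * φ = ((k + γ) * φ : ℝ) := by
      rw [hγ, hm]; push_cast; ring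
    have hneg : ((l - k : ℕ) - m / 2 : ℂ) * φ = -((k + γ) * φ : ℝ) := by
      rw [hγ, hm]; push_cast [hk]; ring
    simp only [Pi.add_apply, Pi.smul_apply, smul_eq_mul, hpos, hneg]
    rw [Complex.ofReal_add, Complex.ofReal_mul, Complex.ofReal_mul, Complex.ofReal_cos,
      Complex.ofReal_sin, Complex.cos, Complex.sin]
    ring
  rw [hsum]
  refine Submodule.sum_mem _ fun k hk => ?_
  have hk : k ≤ l := Finset.mem_range_succ_iff.1 hk
  exact add_mem (Submodule.smul_mem _ _ (exp_mem_complexTrigSpace (by omega)))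
    (Submodule.smul_mem _ _ (exp_mem_complexTrigSpace (by omega)))

lemma trigPoly_cos_add_sin {l k : ℕ} (hk : k ≤ l) (γ a b : ℝ) :
    TrigPoly l γ fun φ => a * cos ((k + γ) * φ) + b * sin ((k + γ) * φ) := by
  refine ⟨Pi.single k a, Pi.single k b, fun φ => ?_⟩
  rw [Finset.sum_eq_single_of_mem k (Finset.mem_range_succ_iff.2 hk)]
  · simp only [Pi.single_eq_same]
  · intro j _ hj
    simp only [Pi.single_eq_of_ne hj, zero_mul, add_zero]

lemma re_mul_exp_ofReal_mul_I (q : ℂ) (x : ℝ) :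
    (q * Complex.exp (x * Complex.I)).re = q.re * cos x - q.im * sin x := by
  rw [Complex.mul_re, Complex.exp_ofReal_mul_I_re, Complex.exp_ofReal_mul_I_im]

-- For `d ≤ 1` every `j ≤ 2l + d` is of the form `l + d + k` or `l - k` with `k ≤ l`.
lemma trigPoly_re_mul_exp {l d m j : ℕ} {γ : ℝ} (hd : d ≤ 1) (hγ : γ = d / 2) (hm : m = 2 * l + d)
    (hj : j ≤ m) (q : ℂ) :
    TrigPoly l γ fun φ => (q * Complex.exp ((j - m / 2) * φ * Complex.I)).re := by
  rcases le_or_gt (l + d) j with hlj | hjl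
  · obtain ⟨k, rfl⟩ := Nat.exists_eq_add_of_le hlj
    convert trigPoly_cos_add_sin (show k ≤ l by omega) γ q.re (-q.im) using 2 with φ
    have hfreq : ((l + d + k : ℕ) - m / 2 : ℂ) * φ = ((k + γ) * φ : ℝ) := by
      rw [hγ, hm]; push_cast; ring
    rw [hfreq, re_mul_exp_ofReal_mul_I]
    ring
  · obtain ⟨k, rfl⟩ := Nat.exists_eq_add_of_le (show j ≤ l by omega)
    convert trigPoly_cos_add_sin (show k ≤ j + k by omega) γ q.re q.im using 2 with φ
    have hfreq : (j - m / 2 : ℂ) * φ = (-((k + γ) * φ) : ℝ) := by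
      rw [hγ, hm]; push_cast; ring
    rw [hfreq, re_mul_exp_ofReal_mul_I, cos_neg, sin_neg]
    ring

lemma trigPoly_re_of_mem_complexTrigSpace {l d m : ℕ} {γ : ℝ} {h : ℝ → ℂ} (hd : d ≤ 1)
    (hγ : γ = d / 2) (hm : m = 2 * l + d) (hh : h ∈ complexTrigSpace m) :
    TrigPoly l γ fun φ => (h φ).re := by
  obtain ⟨P, hP, rfl⟩ := mem_complexTrigSpace.1 hh
  have hsum : (fun φ => (halfAngleEval m P φ).re) = ∑ j ∈ Finset.range (m + 1),
      fun φ : ℝ => (P.coeff j * Complex.exp ((j - m / 2) * φ * Complex.I)).re := by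
    funext φ
    rw [halfAngleEval_eq_sum (Nat.lt_succ_of_le hP), Complex.re_sum, Finset.sum_apply]
  rw [hsum]
  exact Submodule.sum_mem (trigSpace l γ) fun j hj =>
    trigPoly_re_mul_exp hd hγ hm (Finset.mem_range_succ_iff.1 hj) _

lemma TrigPoly.integrable {l : ℕ} {γ : ℝ} {f : ℝ → ℝ} (hf : TrigPoly l γ f) (σ : Measure ℝ)
    [IsFiniteMeasure σ] : Integrable f σ := by
  obtain ⟨a, b, hf⟩ := hf
  rw [funext hf]
  refine integrable_finsetSum _ fun k _ =>
    Integrable.add (Integrable.const_mul ?_ _) (Integrable.const_mul ?_ _)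
  · exact Integrable.of_bound (by fun_prop) 1 (.of_forall fun φ => abs_cos_le_one _)
  · exact Integrable.of_bound (by fun_prop) 1 (.of_forall fun φ => abs_sin_le_one _)

/-- Integration against a finite measure, as a linear functional on `𝒯_{l,γ}`. -/
noncomputable def trigIntegral (l : ℕ) (γ : ℝ) (σ : Measure ℝ) [IsFiniteMeasure σ] :
    trigSpace l γ →ₗ[ℝ] ℝ where
  toFun t := ∫ φ, t.1 φ ∂σ
  map_add' t u := integral_add (TrigPoly.integrable t.2 σ) (TrigPoly.integrable u.2 σ)
  map_smul' c t := integral_const_mul c t.1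

end RealTrigPoly

section Nodes

variable {ι : Type*}

lemma sin_half_sub_ne_zero {x y : ℝ} (hxy : (x : Angle) ≠ y) : sin ((x - y) / 2) ≠ 0 := by
  intro hsin
  obtain ⟨k, hk⟩ := sin_eq_zero_iff.1 hsin
  exact hxy (Angle.angle_eq_iff_two_pi_dvd_sub.2 ⟨k, by linarith⟩)

lemma injOn_coe_angle_Ico : Set.InjOn ((↑) : ℝ → Angle) (Set.Ico 0 (2 * π)) := by
  have : Fact (0 < 2 * π) := ⟨two_pi_pos⟩
  rw [← zero_add (2 * π)]
  exact fun x hx y hy => (AddCircle.coe_eq_coe_iff_of_mem_Ico hx hy).1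

/-- The trigonometric nodes polynomial `T` with nodes `φs s`, `s ∈ S`; the finite set `S` allows
the nodes to be split off one at a time. -/
noncomputable def nodesPoly (S : Finset ι) (φs : ι → ℝ) (φ : ℝ) : ℝ :=
  ∏ s ∈ S, sin ((φ - φs s) / 2)

lemma nodesPoly_apply_node {S : Finset ι} (φs : ι → ℝ) {s : ι} (hs : s ∈ S) :
    nodesPoly S φs (φs s) = 0 :=
  Finset.prod_eq_zero hs (by rw [sub_self, zero_div, sin_zero])

lemma ofReal_sin_half_sub_mem_complexTrigSpace (θ : ℝ) :
    (fun φ : ℝ => (sin ((φ - θ) / 2) : ℂ)) ∈ complexTrigSpace 1 := by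
  have h : TrigPoly 0 (1 / 2) fun φ => sin ((φ - θ) / 2) :=
    ⟨fun _ => -sin (θ / 2), fun _ => cos (θ / 2), fun φ => by
      simp only [sub_div, sin_sub, zero_add, Finset.sum_range_one, Nat.cast_zero]
      ring_nf⟩
  exact h.ofReal_mem_complexTrigSpace (d := 1) (by simp) (by simp)

lemma ofReal_nodesPoly_mem_complexTrigSpace (S : Finset ι) (φs : ι → ℝ) :
    (fun φ => (nodesPoly S φs φ : ℂ)) ∈ complexTrigSpace S.card := by
  induction S using Finset.cons_induction with
  | empty => simpa [nodesPoly] using exp_mem_complexTrigSpace (le_refl 0)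
  | cons s S hs ih =>
    rw [Finset.card_cons, add_comm]
    convert mul_mem_complexTrigSpace (ofReal_sin_half_sub_mem_complexTrigSpace (φs s)) ih
      using 2 with φ
    simp [nodesPoly]

lemma exists_eq_nodesPoly_mul {m : ℕ} {S : Finset ι} {φs : ι → ℝ}
    (hinj : Set.InjOn (fun s => (φs s : Angle)) S) {h : ℝ → ℂ}
    (hh : h ∈ complexTrigSpace (m + S.card)) (hzero : ∀ s ∈ S, h (φs s) = 0) :
    ∃ q ∈ complexTrigSpace m, ∀ φ, h φ = nodesPoly S φs φ * q φ := by
  induction S using Finset.cons_induction generalizing h with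
  | empty => exact ⟨h, hh, fun φ => by simp [nodesPoly]⟩
  | cons a S ha ih =>
    rw [Finset.card_cons, ← add_assoc] at hh
    obtain ⟨q, hq, hhq⟩ := exists_eq_sin_half_mul hh (hzero a (Finset.mem_cons_self a S))
    have hqzero : ∀ s ∈ S, q (φs s) = 0 := fun s hs => by
      have hne : (φs s : Angle) ≠ φs a := fun heq => ha <|
        hinj (Finset.mem_cons_of_mem hs) (Finset.mem_cons_self a S) heq ▸ hs
      have hprod := (hhq (φs s)).symm.trans (hzero s (Finset.mem_cons_of_mem hs))
      exact (mul_eq_zero.1 hprod).resolve_left (mod_cast sin_half_sub_ne_zero hne)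
    obtain ⟨r, hr, hqr⟩ := ih (hinj.mono (by simp)) hq hqzero
    refine ⟨r, hr, fun φ => ?_⟩
    rw [hhq, hqr, nodesPoly, nodesPoly, Finset.prod_cons, Complex.ofReal_mul, mul_assoc]

lemma TrigPoly.mul_nodesPoly {ntil d l : ℕ} {S : Finset ι} (hS : S.card = 2 * ntil + d)
    (φs : ι → ℝ) {t : ℝ → ℝ} (ht : TrigPoly l (d / 2) t) :
    TrigPoly (ntil + d + l) 0 fun φ => t φ * nodesPoly S φs φ := by
  have hmem := mul_mem_complexTrigSpace (ht.ofReal_mem_complexTrigSpace rfl rfl)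
    (ofReal_nodesPoly_mem_complexTrigSpace S φs)
  convert trigPoly_re_of_mem_complexTrigSpace (l := ntil + d + l) (γ := 0) zero_le_one
    (by simp) (by omega) hmem using 2 with φ
  rw [Pi.mul_apply, ← Complex.ofReal_mul, Complex.ofReal_re]

lemma TrigPoly.exists_eq_mul_nodesPoly {ntil d l : ℕ} (hd : d ≤ 1) {S : Finset ι}
    (hS : S.card = 2 * ntil + d) {φs : ι → ℝ} (hinj : Set.InjOn (fun s => (φs s : Angle)) S)
    {p : ℝ → ℝ} (hp : TrigPoly (ntil + d + l) 0 p) (hzero : ∀ s ∈ S, p (φs s) = 0) :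
    ∃ t, TrigPoly l (d / 2) t ∧ ∀ φ, p φ = t φ * nodesPoly S φs φ := by
  have hmem : (fun φ => (p φ : ℂ)) ∈ complexTrigSpace (2 * l + d + S.card) :=
    hp.ofReal_mem_complexTrigSpace (d := 0) (by simp) (by omega)
  obtain ⟨q, hq, hpq⟩ := exists_eq_nodesPoly_mul hinj hmem fun s hs =>
    Complex.ofReal_eq_zero.2 (hzero s hs)
  -- `p` and the nodes polynomial are real, so the quotient may be replaced by its real part.
  refine ⟨_, trigPoly_re_of_mem_complexTrigSpace hd rfl rfl hq, fun φ => ?_⟩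
  rw [mul_comm, ← Complex.re_ofReal_mul, ← hpq, Complex.ofReal_re]

end Nodes

theorem stmt0_general {ι : Type*} [Fintype ι] (σ : Measure ℝ) [IsFiniteMeasure σ]
    {ntil d : ℕ} (hd : d ≤ 1) (hn : Fintype.card ι = 2 * ntil + d)
    {φs : ι → ℝ} (hinj : Function.Injective fun s => (φs s : Angle)) (l : ℕ) :
    (∃ μ : ι → ℝ, ∀ t : ℝ → ℝ, TrigPoly (ntil + d + l) 0 t →
        (1 / (2 * π)) * ∫ φ, t φ ∂σ = ∑ s, μ s * t (φs s)) ↔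
      ∀ t : ℝ → ℝ, TrigPoly l (d / 2) t → ∫ φ, t φ * nodesPoly Finset.univ φs φ ∂σ = 0 := by
  have hweights : (∃ μ : ι → ℝ, ∀ t : ℝ → ℝ, TrigPoly (ntil + d + l) 0 t →
      (1 / (2 * π)) * ∫ φ, t φ ∂σ = ∑ s, μ s * t (φs s)) ↔
      ∀ p : ℝ → ℝ, TrigPoly (ntil + d + l) 0 p → (∀ s, p (φs s) = 0) →
        (1 / (2 * π)) * ∫ φ, p φ ∂σ = 0 := by
    have h := exists_eq_sum_mul_eval_iff ((1 / (2 * π)) • trigIntegral (ntil + d + l) 0 σ) φs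
    simp only [Subtype.forall] at h
    exact h
  have hcard : Finset.univ.card = 2 * ntil + d := hn
  rw [hweights]
  constructor
  · intro h t ht
    have hint := h _ (ht.mul_nodesPoly hcard φs) fun s => by
      rw [nodesPoly_apply_node φs (Finset.mem_univ s), mul_zero]
    exact (mul_eq_zero.1 hint).resolve_left (one_div_ne_zero two_pi_pos.ne')
  · intro h p hp hzero
    obtain ⟨t, ht, hpt⟩ :=
      hp.exists_eq_mul_nodesPoly hd hcard hinj.injOn fun s _ => hzero s
    rw [funext hpt, h t ht, mul_zero]

theorem stmt0
    (σ : Measure ℝ) [IsFiniteMeasure σ]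
    (hsupp : σ (Set.Icc 0 (2 * π))ᶜ = 0)
    (hnorm : (1 / (2 * π)) * ∫ _φ, (1 : ℝ) ∂σ = 1)
    (ntil d : ℕ) (hd : d = 0 ∨ d = 1)
    (n : ℕ) (hn : n = 2 * ntil + d)
    (φs : Fin n → ℝ) (hmono : StrictMono φs)
    (hrange : ∀ s, φs s ∈ Set.Ico 0 (2 * π))
    (T : ℝ → ℝ) (hT : ∀ φ, T φ = ∏ s, Real.sin ((φ - φs s) / 2))
    (l : ℕ) :
    (∃ μ : Fin n → ℝ, ∀ t : ℝ → ℝ, TrigPoly (ntil + d + l) 0 t →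
        (1 / (2 * π)) * ∫ φ, t φ ∂σ = ∑ s, μ s * t (φs s)) ↔
    (∀ t : ℝ → ℝ, TrigPoly l ((d : ℝ) / 2) t → ∫ φ, t φ * T φ ∂σ = 0) := by
  obtain rfl : T = nodesPoly Finset.univ φs := funext hT
  exact stmt0_general σ (by omega) (by simpa using hn)
    (fun s s' h => hmono.injective (injOn_coe_angle_Ico (hrange s) (hrange s') h)) l
end

section
/- Let n ∈ ℕ, 0 ≤ m ≤ n−1, 0 ≤ φ₁ < φ₂ < ⋯ < φ_n < 2π. The following are equivalent: (a) there exist positive weights μ₁,…,μ_n > 0 with (1/2π)∫₀^{2π} e^{−ikφ} dσ(φ) = Σ_{s=1}^n μ_s e^{−ikφ_s} for all integers k with |k| ≤ n−m−1; (b) there exist complex numbers ã₀,…,ã_{n−2} with |ã_j| < 1 for j = 0,…,n−2 and ã_j = a_j for j = 0,…,n−m−2, such that the polynomial Φ̃_{n−1} generated by Φ̃₀ = 1 and Φ̃_j(z) = zΦ̃_{j−1}(z) − ã_{j−1}Φ̃*_{j−1}(z), together with some η ∈ 𝕋, satisfies zΦ̃_{n−1}(z) + ηΦ̃*_{n−1}(z)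 = ∏_{s=1}^n (z − e^{iφ_s}). -/
/-!
The form `(P, Q) ↦ ∫ conj P * Q` of a measure on the unit circle is Hermitian and invariant under
multiplication by `z`. For such forms, monic polynomials obeying the Szegő recurrence are orthogonal
to all polynomials of lower degree as soon as they are orthogonal to `1`, so under a normalized
measure the moments up to order `N` and the Verblunsky coefficients `a_0, …, a_{N-1}` determine each
other.

For (a) ⇒ (b), equality of moments says that `Φ_0, …, Φ_{n-m-1}` are orthogonal for the discrete
measure `∑ μ_s δ_{z_s}` too. The sequence extends to `Φ̃_0, …, Φ̃_n`, orthogonal for the discrete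
measure, and `‖Φ̃_{j+1}‖² = (1 - |ã_j|²) ‖Φ̃_j‖²`. Nonzero polynomials of degree below `n` have
positive norm, hence `|ã_j| < 1` for `j ≤ n - 2`; the polynomial `Φ̃_n = ∏ (z - z_s)` has norm zero,
hence `|ã_{n-1}| = 1`, and `η = -ã_{n-1}`.

For (b) ⇒ (a), the Christoffel–Darboux kernel `K` built from `Φ̃_0, …, Φ̃_{n-1}` vanishes at
pairs of distinct zeros of `zΦ̃_{n-1} + ηΦ̃_{n-1}*`. Thus the matrix of values `Φ̃_j(z_s)` is
inverted by a rescaling of its conjugate transpose, and the weights `μ_s = 1 / K(z_s, z_s)` make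
every `Φ̃_j`, `1 ≤ j ≤ n - 1`, orthogonal to `1`. As `Φ̃_j = Φ_j` for `j ≤ n - m - 1`, this fixes
the moments.
-/

open MeasureTheory Real Polynomial

/-- The reversed polynomial `P*(z) = z^n conj(P(1/conj z))` at degree `n`. -/
noncomputable def pstar (n : ℕ) (P : Polynomial ℂ) : Polynomial ℂ :=
  Polynomial.reflect n (P.map (starRingEnd ℂ))

section Reversal

variable {n : ℕ} {P Q : ℂ[X]}

theorem pstar_zero (n : ℕ) : pstar n 0 = 0 := by
  simp [pstar]

theorem pstar_add (n : ℕ) (P Q : ℂ[X]) : pstar n (P + Q) = pstar n P + pstar n Q := by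
  simp [pstar, reflect_add]

theorem pstar_sub (n : ℕ) (P Q : ℂ[X]) : pstar n (P - Q) = pstar n P - pstar n Q := by
  simp [pstar, reflect_sub]

theorem pstar_C_mul (n : ℕ) (c : ℂ) (P : ℂ[X]) :
    pstar n (C c * P) = C (starRingEnd ℂ c) * pstar n P := by
  simp [pstar]

theorem pstar_X_pow {k : ℕ} (hk : k ≤ n) : pstar n (X ^ k) = X ^ (n - k) := by
  simp [pstar, reflect_monomial, revAt_le hk]

theorem pstar_pstar (n : ℕ) (P : ℂ[X]) : pstar n (pstar n P) = P := by
  simp [pstar, reflect_map, Polynomial.map_map]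

theorem natDegree_pstar_le (hP : P.natDegree ≤ n) : (pstar n P).natDegree ≤ n :=
  natDegree_reflect_le.trans <| max_le le_rfl <| natDegree_map_le.trans hP

theorem pstar_succ_X_mul (hP : P.natDegree ≤ n) : pstar (n + 1) (X * P) = pstar n P := by
  have h := reflect_mul X (P.map (starRingEnd ℂ)) natDegree_X_le (natDegree_map_le.trans hP)
  simpa [pstar, add_comm] using h

theorem pstar_succ_pstar (hP : P.natDegree ≤ n) : pstar (n + 1) (pstar n P) = X * P := by
  rw [← pstar_succ_X_mul hP, pstar_pstar]

theorem degree_pstar_X_mul_lt (hP : P.degree < n) : (pstar n (X * P)).degree < n := by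
  cases n with
  | zero => simp [degree_eq_bot.1 (Nat.WithBot.lt_zero_iff.1 hP), pstar_zero]
  | succ n =>
    have hPn : P.natDegree ≤ n := natDegree_le_of_degree_le (Order.lt_succ_iff.1 hP)
    rw [pstar_succ_X_mul hPn]
    exact (degree_le_of_natDegree_le (natDegree_pstar_le hPn)).trans_lt (mod_cast n.lt_succ_self)

end Reversal

/-- The monic polynomials generated by the Szegő recurrence with coefficients `a`. -/
noncomputable def szegoPoly (a : ℕ → ℂ) : ℕ → ℂ[X]
  | 0 => 1
  | j + 1 => X * szegoPoly a j - C (a j) * pstar j (szegoPoly a j)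

section SzegoPoly

variable {a b : ℕ → ℂ} {n : ℕ}

theorem szegoPoly_zero (a : ℕ → ℂ) : szegoPoly a 0 = 1 := rfl

theorem szegoPoly_succ (a : ℕ → ℂ) (j : ℕ) :
    szegoPoly a (j + 1) = X * szegoPoly a j - C (a j) * pstar j (szegoPoly a j) := rfl

theorem eq_szegoPoly_of_recurrence {Φ : ℕ → ℂ[X]} (h0 : Φ 0 = 1)
    (hrec : ∀ j < n, Φ (j + 1) = X * Φ j - C (a j) * pstar j (Φ j)) :
    ∀ j ≤ n, Φ j = szegoPoly a j := by
  intro j hj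
  induction j with
  | zero => exact h0
  | succ j ih => rw [hrec j hj, ih (Nat.le_of_succ_le hj), szegoPoly_succ]

theorem szegoPoly_congr (hab : ∀ j < n, a j = b j) : szegoPoly a n = szegoPoly b n :=
  eq_szegoPoly_of_recurrence (szegoPoly_zero a)
    (fun j hj => by rw [szegoPoly_succ, hab j hj]) n le_rfl

theorem monic_szegoPoly_and_natDegree (a : ℕ → ℂ) (j : ℕ) :
    (szegoPoly a j).Monic ∧ (szegoPoly a j).natDegree = j := by
  induction j with
  | zero => simp [szegoPoly_zero]
  | succ j ih =>
    obtain ⟨hmonic, hdeg⟩ := ih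
    have hX : (X * szegoPoly a j).natDegree = j + 1 := by
      rw [natDegree_X_mul hmonic.ne_zero, hdeg]
    have hlt : (C (a j) * pstar j (szegoPoly a j)).natDegree < (X * szegoPoly a j).natDegree :=
      hX ▸ Nat.lt_succ_of_le ((natDegree_C_mul_le _ _).trans (natDegree_pstar_le hdeg.le))
    rw [szegoPoly_succ]
    exact ⟨(monic_X.mul hmonic).sub_of_left (degree_lt_degree hlt),
      (natDegree_sub_eq_left_of_natDegree_lt hlt).trans hX⟩

theorem monic_szegoPoly (a : ℕ → ℂ) (j : ℕ) : (szegoPoly a j).Monic :=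
  (monic_szegoPoly_and_natDegree a j).1

theorem natDegree_szegoPoly (a : ℕ → ℂ) (j : ℕ) : (szegoPoly a j).natDegree = j :=
  (monic_szegoPoly_and_natDegree a j).2

theorem degree_szegoPoly (a : ℕ → ℂ) (j : ℕ) : (szegoPoly a j).degree = j := by
  rw [degree_eq_natDegree (monic_szegoPoly a j).ne_zero, natDegree_szegoPoly]

theorem pstar_szegoPoly_succ (a : ℕ → ℂ) (j : ℕ) :
    pstar (j + 1) (szegoPoly a (j + 1)) =
      pstar j (szegoPoly a j) - C (starRingEnd ℂ (a j)) * (X * szegoPoly a j) := by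
  rw [szegoPoly_succ, pstar_sub, pstar_C_mul, pstar_succ_X_mul (natDegree_szegoPoly a j).le,
    pstar_succ_pstar (natDegree_szegoPoly a j).le]

theorem degree_szegoPoly_sub_lt {P : ℂ[X]} (hP : P.Monic) (hdeg : P.degree = n) :
    (szegoPoly a n - P).degree < n := by
  rw [← degree_szegoPoly a n] at hdeg ⊢
  exact degree_sub_lt_left hdeg.symm (monic_szegoPoly a n).ne_zero
    ((monic_szegoPoly a n).leadingCoeff.trans hP.leadingCoeff.symm)

/-- The product `∏ (1 - |a i|²)` over `i < j`: the squared norm of `szegoPoly a j` with respect to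
a probability measure on the unit circle with Verblunsky coefficients `a`. -/
noncomputable def szegoNormSq (a : ℕ → ℂ) (j : ℕ) : ℝ :=
  ∏ i ∈ Finset.range j, (1 - ‖a i‖ ^ 2)

theorem szegoNormSq_pos (ha : ∀ j < n, ‖a j‖ < 1) : 0 < szegoNormSq a n :=
  Finset.prod_pos fun i hi => by
    have := ha i (Finset.mem_range.1 hi)
    nlinarith [norm_nonneg (a i)]

theorem szegoNormSq_succ (a : ℕ → ℂ) (j : ℕ) :
    (szegoNormSq a (j + 1) : ℂ) = szegoNormSq a j * (1 - a j * starRingEnd ℂ (a j)) := by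
  simp [szegoNormSq, Finset.prod_range_succ, Complex.mul_conj']

/-- The Christoffel–Darboux kernel, the reproducing kernel of the polynomials of degree below `n`
in the form for which the `szegoPoly a j` are orthogonal with squared norms `szegoNormSq a j`. -/
noncomputable def christoffelDarbouxKernel (a : ℕ → ℂ) (n : ℕ) (z w : ℂ) : ℂ :=
  ∑ j ∈ Finset.range n,
    (szegoPoly a j).eval z * starRingEnd ℂ ((szegoPoly a j).eval w) / szegoNormSq a j

theorem one_sub_mul_christoffelDarbouxKernel (z w : ℂ) (hn : szegoNormSq a n ≠ 0) :
    (1 - z * starRingEnd ℂ w) * christoffelDarbouxKernel a (n + 1) z w =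
      ((pstar n (szegoPoly a n)).eval z * starRingEnd ℂ ((pstar n (szegoPoly a n)).eval w) -
        z * starRingEnd ℂ w *
          ((szegoPoly a n).eval z * starRingEnd ℂ ((szegoPoly a n).eval w))) /
        szegoNormSq a n := by
  induction n with
  | zero => simp [christoffelDarbouxKernel, szegoPoly_zero, szegoNormSq, pstar]
  | succ n ih =>
    have hsucc := szegoNormSq_succ a n
    have hprod : (szegoNormSq a n : ℂ) * (1 - a n * starRingEnd ℂ (a n)) ≠ 0 := by
      rw [← hsucc]
      exact_mod_cast hn
    obtain ⟨hne, hfactor⟩ := mul_ne_zero_iff.1 hprod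
    rw [christoffelDarbouxKernel, Finset.sum_range_succ, ← christoffelDarbouxKernel, mul_add,
      ih (by exact_mod_cast hne), pstar_szegoPoly_succ, szegoPoly_succ, hsucc]
    simp only [eval_sub, eval_mul, eval_X, eval_C, map_sub, map_mul, Complex.conj_conj]
    field_simp
    ring

theorem christoffelDarbouxKernel_eq_zero {z w : ℂ} (hz : ‖z‖ = 1) (hzw : z ≠ w)
    (hn : szegoNormSq a n ≠ 0) (han : ‖a n‖ = 1) (hrootz : (szegoPoly a (n + 1)).eval z = 0)
    (hrootw : (szegoPoly a (n + 1)).eval w = 0) :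
    christoffelDarbouxKernel a (n + 1) z w = 0 := by
  have hfactor : 1 - z * starRingEnd ℂ w ≠ 0 := by
    intro h
    have hw : starRingEnd ℂ w = starRingEnd ℂ z := by
      rw [← Complex.inv_eq_conj hz]
      exact eq_inv_of_mul_eq_one_right (sub_eq_zero.1 h).symm
    exact hzw ((starRingEnd ℂ).injective hw).symm
  refine (mul_eq_zero.1 ?_).resolve_left hfactor
  rw [one_sub_mul_christoffelDarbouxKernel z w hn, div_eq_zero_iff]
  left
  have hunit : a n * starRingEnd ℂ (a n) = 1 := by simp [Complex.mul_conj', han]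
  rw [szegoPoly_succ] at hrootz hrootw
  have hconj := congrArg (starRingEnd ℂ) hrootw
  simp only [eval_sub, eval_mul, eval_X, eval_C, map_sub, map_mul, map_zero] at hrootz hconj
  rw [mul_mul_mul_comm, sub_eq_zero.1 hrootz, sub_eq_zero.1 hconj]
  linear_combination -(eval z (pstar n (szegoPoly a n)) *
    starRingEnd ℂ (eval w (pstar n (szegoPoly a n)))) * hunit

theorem christoffelDarbouxKernel_self (a : ℕ → ℂ) (n : ℕ) (z : ℂ) :
    christoffelDarbouxKernel a n z z =
      (∑ j ∈ Finset.range n, ‖(szegoPoly a j).eval z‖ ^ 2 / szegoNormSq a j : ℝ) := by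
  simp [christoffelDarbouxKernel, Complex.mul_conj']

end SzegoPoly

/-- Hermitian forms on `ℂ[X]` whose Gram matrix in the monomials is Toeplitz, as is the form
`(P, Q) ↦ ∫ conj P * Q` of a measure on the unit circle. -/
structure IsHermitianToeplitz (B : ℂ[X] →ₗ⋆[ℂ] ℂ[X] →ₗ[ℂ] ℂ) : Prop where
  isSymm : B.IsSymm
  apply_X_mul : ∀ P Q, B (X * P) (X * Q) = B P Q

namespace IsHermitianToeplitz

variable {B : ℂ[X] →ₗ⋆[ℂ] ℂ[X] →ₗ[ℂ] ℂ} (hB : IsHermitianToeplitz B)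
  {a : ℕ → ℂ} {j k l n : ℕ} {P Q : ℂ[X]}
include hB

theorem apply_X_pow_mul (k : ℕ) (P Q : ℂ[X]) : B (X ^ k * P) (X ^ k * Q) = B P Q := by
  induction k with
  | zero => simp
  | succ k ih => rw [pow_succ', mul_assoc, mul_assoc, hB.apply_X_mul, ih]

theorem apply_X_pow_X_pow_sub (hk : k ≤ n) (hl : l ≤ n) :
    B (X ^ k) (X ^ (n - l)) = B (X ^ l) (X ^ (n - k)) := by
  wlog hkl : k ≤ l generalizing k l
  · exact (this hl hk (le_of_not_ge hkl)).symm
  obtain ⟨d, rfl⟩ := Nat.exists_eq_add_of_le hkl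
  have h := hB.apply_X_pow_mul d (X ^ k) (X ^ (n - (k + d)))
  rwa [← pow_add, ← pow_add, add_comm d k, show d + (n - (k + d)) = n - k by omega, eq_comm] at h

theorem apply_pstar_right (hP : P.natDegree ≤ n) (hQ : Q.natDegree ≤ n) :
    B P (pstar n Q) = B Q (pstar n P) := by
  refine induction_with_natDegree_le (fun P => B P (pstar n Q) = B Q (pstar n P)) n
    (by simp [pstar_zero]) (fun k c _ hk => ?_)
    (fun P₁ P₂ _ _ h₁ h₂ => by simp [pstar_add, h₁, h₂]) P hP
  refine induction_with_natDegree_le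
    (fun Q => B (C c * X ^ k) (pstar n Q) = B Q (pstar n (C c * X ^ k))) n
    (by simp [pstar_zero]) (fun l d _ hl => ?_)
    (fun Q₁ Q₂ _ _ h₁ h₂ => by simp [pstar_add, h₁, h₂]) Q hQ
  rw [pstar_C_mul, pstar_C_mul, pstar_X_pow hk, pstar_X_pow hl]
  simp only [← smul_eq_C_mul, map_smulₛₗ, LinearMap.smul_apply, hB.apply_X_pow_X_pow_sub hk hl,
    RingHom.id_apply, smul_comm (starRingEnd ℂ c)]

theorem apply_pstar_pstar (hP : P.natDegree ≤ n) (hQ : Q.natDegree ≤ n) :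
    B (pstar n P) (pstar n Q) = B Q P := by
  rw [hB.apply_pstar_right (natDegree_pstar_le hP) hQ, pstar_pstar]

section Orthogonality

variable (horth : ∀ j < n, B 1 (szegoPoly a (j + 1)) = 0)
include horth

/-- Writing `Q = X * Q' + c`, orthogonality to `X * Q'` is inherited from the previous degree:
multiplication by `X` preserves the form, and reversal turns `X * Q'` into a polynomial of lower
degree. -/
theorem apply_szegoPoly_eq_zero (hj : j ≤ n) (hQ : Q.degree < j) :
    B Q (szegoPoly a j) = 0 := by
  induction j generalizing Q with
  | zero => simp [degree_eq_bot.1 (Nat.WithBot.lt_zero_iff.1 hQ)]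
  | succ j ih =>
    have ih {R : ℂ[X]} (hR : R.degree < j) := ih (Nat.le_of_succ_le hj) hR
    have hdivX : (divX Q).degree < j := (degree_lt_iff_coeff_zero _ _).2 fun k hk => by
      rw [coeff_divX]
      exact (degree_lt_iff_coeff_zero _ _).1 hQ _ (Nat.succ_le_succ hk)
    have hXdeg : (X * divX Q).natDegree ≤ j := natDegree_le_of_degree_le <| by
      rw [degree_mul, degree_X, add_comm]
      exact Nat.WithBot.add_one_le_of_lt hdivX
    have hshift : B (X * divX Q) (X * szegoPoly a j) = 0 := by rw [hB.apply_X_mul, ih hdivX]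
    have hreverse : B (X * divX Q) (pstar j (szegoPoly a j)) = 0 := by
      rw [hB.apply_pstar_right hXdeg (natDegree_szegoPoly a j).le, ← hB.isSymm.eq,
        ih (degree_pstar_X_mul_lt hdivX), map_zero]
    have hconst : B (C (Q.coeff 0)) (szegoPoly a (j + 1)) = 0 := by
      rw [← mul_one (C _), ← smul_eq_C_mul, map_smulₛₗ, LinearMap.smul_apply, horth j hj, smul_zero]
    have hX : B (X * divX Q) (szegoPoly a (j + 1)) = 0 := by
      rw [szegoPoly_succ, ← smul_eq_C_mul, map_sub, map_smul, hshift, hreverse, smul_zero, sub_zero]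
    rw [← X_mul_divX_add Q, map_add, LinearMap.add_apply, hX, hconst, add_zero]

theorem apply_szegoPoly_of_monic (hj : j ≤ n) (hP : P.Monic) (hdeg : P.degree = j) :
    B P (szegoPoly a j) = B (szegoPoly a j) (szegoPoly a j) := by
  have h := hB.apply_szegoPoly_eq_zero horth hj (degree_szegoPoly_sub_lt (a := a) hP hdeg)
  rw [map_sub, LinearMap.sub_apply, sub_eq_zero] at h
  exact h.symm

theorem apply_one_pstar_szegoPoly (hj : j ≤ n) :
    B 1 (pstar j (szegoPoly a j)) = B (szegoPoly a j) (szegoPoly a j) := by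
  rw [hB.apply_pstar_right (by simp) (natDegree_szegoPoly a j).le, ← pow_zero X,
    pstar_X_pow (Nat.zero_le j), ← hB.isSymm.eq, Nat.sub_zero,
    hB.apply_szegoPoly_of_monic horth hj (monic_X_pow j) (degree_X_pow j), hB.isSymm.eq]

/-- Pythagoras for `X * Φ_j = Φ_{j+1} + a_j Φ_j*`, whose summands are orthogonal. -/
theorem apply_szegoPoly_succ_self (hj : j < n) :
    B (szegoPoly a (j + 1)) (szegoPoly a (j + 1)) =
      (1 - ‖a j‖ ^ 2) * B (szegoPoly a j) (szegoPoly a j) := by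
  have hdeg := (natDegree_szegoPoly a j).le
  have hperp : B (pstar j (szegoPoly a j)) (szegoPoly a (j + 1)) = 0 := by
    refine hB.apply_szegoPoly_eq_zero horth hj ?_
    exact (degree_le_of_natDegree_le (natDegree_pstar_le hdeg)).trans_lt (mod_cast j.lt_succ_self)
  have hperp' : B (szegoPoly a (j + 1)) (pstar j (szegoPoly a j)) = 0 := by
    rw [← hB.isSymm.eq, hperp, map_zero]
  have hsum : X * szegoPoly a j = szegoPoly a (j + 1) + a j • pstar j (szegoPoly a j) := by
    rw [szegoPoly_succ, smul_eq_C_mul, sub_add_cancel]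
  have h := hB.apply_X_mul (szegoPoly a j) (szegoPoly a j)
  rw [hsum] at h
  simp only [map_add, LinearMap.add_apply, map_smulₛₗ, LinearMap.smul_apply, hperp, hperp',
    hB.apply_pstar_pstar hdeg hdeg, smul_eq_mul, mul_zero, RingHom.id_apply, add_zero,
    zero_add] at h
  rw [← Complex.mul_conj']
  linear_combination h

theorem norm_lt_one_of_pos (hj : j < n)
    (h0 : 0 < (B (szegoPoly a j) (szegoPoly a j)).re)
    (h1 : 0 < (B (szegoPoly a (j + 1)) (szegoPoly a (j + 1))).re) : ‖a j‖ < 1 := by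
  rw [hB.apply_szegoPoly_succ_self horth hj] at h1
  norm_cast at h1
  rw [Complex.re_ofReal_mul] at h1
  have := pos_of_mul_pos_left h1 h0.le
  nlinarith [norm_nonneg (a j)]

theorem norm_eq_one_of_eq_zero (hj : j < n)
    (h0 : B (szegoPoly a j) (szegoPoly a j) ≠ 0)
    (h1 : B (szegoPoly a (j + 1)) (szegoPoly a (j + 1)) = 0) : ‖a j‖ = 1 := by
  rw [hB.apply_szegoPoly_succ_self horth hj] at h1
  have h : ‖a j‖ ^ 2 = 1 := by
    exact_mod_cast (sub_eq_zero.1 ((mul_eq_zero.1 h1).resolve_right h0)).symm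
  exact (pow_eq_one_iff_of_nonneg (norm_nonneg _) two_ne_zero).1 h

end Orthogonality

theorem exists_orthogonal_szegoPoly_extending {N : ℕ} (hN : N ≤ n)
    (horth : ∀ j < N, B 1 (szegoPoly a (j + 1)) = 0)
    (hne : ∀ P : ℂ[X], P ≠ 0 → P.degree < n → B P P ≠ 0) :
    ∃ b : ℕ → ℂ, (∀ j < N, b j = a j) ∧ ∀ j < n, B 1 (szegoPoly b (j + 1)) = 0 := by
  induction n, hN using Nat.le_induction with
  | base => exact ⟨a, fun _ _ => rfl, horth⟩
  | succ n hN ih =>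
    obtain ⟨b, hba, hb⟩ := ih fun P hP hlt => hne P hP (hlt.trans (mod_cast n.lt_succ_self))
    set c := B 1 (X * szegoPoly b n) / B 1 (pstar n (szegoPoly b n))
    have hcongr (j : ℕ) (hj : j ≤ n) : szegoPoly (Function.update b n c) j = szegoPoly b j :=
      szegoPoly_congr fun i hi => Function.update_of_ne (hi.trans_le hj).ne _ _
    refine ⟨Function.update b n c, fun j hj => ?_, fun j hj => ?_⟩
    · rw [Function.update_of_ne (hj.trans_le hN).ne, hba j hj]
    · rcases (Nat.lt_succ_iff_lt_or_eq).1 hj with hj | rfl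
      · rw [hcongr _ hj, hb j hj]
      · have hpstar : B 1 (pstar j (szegoPoly b j)) ≠ 0 := by
          rw [hB.apply_one_pstar_szegoPoly hb le_rfl]
          exact hne _ (monic_szegoPoly b j).ne_zero (by rw [degree_szegoPoly]; exact mod_cast hj)
        rw [szegoPoly_succ, hcongr j le_rfl, Function.update_self, ← smul_eq_C_mul, map_sub,
          map_smul, smul_eq_mul, div_mul_cancel₀ _ hpstar, sub_self]

end IsHermitianToeplitz

section DiscreteForm

variable {ι : Type*} [Fintype ι]

/-- The form `(P, Q) ↦ ∫ conj P * Q` of the discrete measure `∑ s, μ s • δ_(z s)`. -/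
noncomputable def discreteForm (μ : ι → ℝ) (z : ι → ℂ) : ℂ[X] →ₗ⋆[ℂ] ℂ[X] →ₗ[ℂ] ℂ :=
  LinearMap.mk₂'ₛₗ (starRingEnd ℂ) (RingHom.id ℂ)
    (fun P Q => ∑ s, μ s * (starRingEnd ℂ (P.eval (z s)) * Q.eval (z s)))
    (fun P₁ P₂ Q => by simp [add_mul, mul_add, Finset.sum_add_distrib])
    (fun c P Q => by simp [Finset.mul_sum, mul_assoc, mul_left_comm])
    (fun P Q₁ Q₂ => by simp [mul_add, Finset.sum_add_distrib])
    (fun c P Q => by simp [Finset.mul_sum, mul_left_comm])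

variable {μ : ι → ℝ} {z : ι → ℂ} {a : ℕ → ℂ} {n : ℕ}

theorem discreteForm_apply (μ : ι → ℝ) (z : ι → ℂ) (P Q : ℂ[X]) :
    discreteForm μ z P Q = ∑ s, μ s * (starRingEnd ℂ (P.eval (z s)) * Q.eval (z s)) := rfl

theorem discreteForm_one_apply (μ : ι → ℝ) (z : ι → ℂ) (P : ℂ[X]) :
    discreteForm μ z 1 P = ∑ s, μ s * P.eval (z s) := by
  simp [discreteForm_apply]

theorem discreteForm_apply_self (μ : ι → ℝ) (z : ι → ℂ) (P : ℂ[X]) :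
    discreteForm μ z P P = (∑ s, μ s * ‖P.eval (z s)‖ ^ 2 : ℝ) := by
  simp [discreteForm_apply, Complex.conj_mul']

theorem isHermitianToeplitz_discreteForm (μ : ι → ℝ) (hz : ∀ s, ‖z s‖ = 1) :
    IsHermitianToeplitz (discreteForm μ z) where
  isSymm := ⟨fun P Q => by simp [discreteForm_apply, mul_comm]⟩
  apply_X_mul P Q := by
    simp [discreteForm_apply, mul_mul_mul_comm, Complex.conj_mul', hz]

theorem discreteForm_apply_self_re_pos (hμ : ∀ s, 0 < μ s) (hinj : Function.Injective z)
    {P : ℂ[X]} (hP : P ≠ 0) (hdeg : P.degree < Fintype.card ι) :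
    0 < (discreteForm μ z P P).re := by
  rw [discreteForm_apply_self, Complex.ofReal_re]
  obtain ⟨s, hs⟩ : ∃ s, P.eval (z s) ≠ 0 := by
    by_contra! h
    exact hP (eq_zero_of_degree_lt_of_eval_index_eq_zero Finset.univ hinj.injOn hdeg fun s _ => h s)
  exact Finset.sum_pos' (fun t _ => mul_nonneg (hμ t).le (sq_nonneg _))
    ⟨s, Finset.mem_univ s, mul_pos (hμ s) (by positivity)⟩

theorem discreteForm_nodal_right (μ : ι → ℝ) (z : ι → ℂ) (P : ℂ[X]) :
    discreteForm μ z P (Lagrange.nodal Finset.univ z) = 0 := by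
  simp [discreteForm_apply, Lagrange.eval_nodal_at_node]

theorem szegoPoly_card_eq_nodal (hμ : ∀ s, 0 < μ s) (hz : ∀ s, ‖z s‖ = 1)
    (hinj : Function.Injective z)
    (horth : ∀ j < Fintype.card ι, discreteForm μ z 1 (szegoPoly a (j + 1)) = 0) :
    szegoPoly a (Fintype.card ι) = Lagrange.nodal Finset.univ z := by
  have hdeg : (szegoPoly a (Fintype.card ι) - Lagrange.nodal Finset.univ z).degree <
      Fintype.card ι := degree_szegoPoly_sub_lt Lagrange.nodal_monic Lagrange.degree_nodal
  by_contra hne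
  refine (discreteForm_apply_self_re_pos hμ hinj (sub_ne_zero.2 hne) hdeg).ne' ?_
  rw [map_sub, discreteForm_nodal_right, sub_zero,
    (isHermitianToeplitz_discreteForm μ hz).apply_szegoPoly_eq_zero horth le_rfl hdeg,
    Complex.zero_re]

theorem norm_lt_one_of_discreteForm_orthogonal (hμ : ∀ s, 0 < μ s) (hz : ∀ s, ‖z s‖ = 1)
    (hinj : Function.Injective z)
    (horth : ∀ j < Fintype.card ι, discreteForm μ z 1 (szegoPoly a (j + 1)) = 0) {j : ℕ}
    (hj : j + 1 < Fintype.card ι) : ‖a j‖ < 1 := by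
  have hpos (i : ℕ) (hi : i < Fintype.card ι) :
      0 < (discreteForm μ z (szegoPoly a i) (szegoPoly a i)).re :=
    discreteForm_apply_self_re_pos hμ hinj (monic_szegoPoly a i).ne_zero
      (by rw [degree_szegoPoly]; exact mod_cast hi)
  exact (isHermitianToeplitz_discreteForm μ hz).norm_lt_one_of_pos horth (by omega)
    (hpos j (by omega)) (hpos (j + 1) hj)

theorem norm_eq_one_of_discreteForm_orthogonal (hμ : ∀ s, 0 < μ s) (hz : ∀ s, ‖z s‖ = 1)
    (hinj : Function.Injective z)
    (horth : ∀ j < Fintype.card ι, discreteForm μ z 1 (szegoPoly a (j + 1)) = 0) {j : ℕ}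
    (hj : j + 1 = Fintype.card ι) : ‖a j‖ = 1 := by
  have hpos : 0 < (discreteForm μ z (szegoPoly a j) (szegoPoly a j)).re :=
    discreteForm_apply_self_re_pos hμ hinj (monic_szegoPoly a j).ne_zero
      (by rw [degree_szegoPoly]; exact mod_cast (by omega))
  refine (isHermitianToeplitz_discreteForm μ hz).norm_eq_one_of_eq_zero horth (by omega)
    (fun h => hpos.ne' (by rw [h, Complex.zero_re])) ?_
  rw [hj, szegoPoly_card_eq_nodal hμ hz hinj horth, discreteForm_nodal_right]

/-- If the kernel is diagonal on the nodes, the matrix of values `Φ_j (z s)` is inverted by its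
rescaled conjugate transpose; inverting on the other side gives the quadrature formula. -/
theorem exists_szego_quadrature (hι : Fintype.card ι = n + 1) (ha : ∀ j < n, ‖a j‖ < 1)
    (han : ‖a n‖ = 1) (hz : ∀ s, ‖z s‖ = 1) (hinj : Function.Injective z)
    (hroot : ∀ s, (szegoPoly a (n + 1)).eval (z s) = 0) :
    ∃ μ : ι → ℝ, (∀ s, 0 < μ s) ∧
      ∀ j < n + 1, discreteForm μ z 1 (szegoPoly a j) = if j = 0 then 1 else 0 := by
  classical
  have hnormSq (j : ℕ) (hj : j ≤ n) : 0 < szegoNormSq a j :=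
    szegoNormSq_pos fun i hi => ha i (hi.trans_le hj)
  set K : ι → ℝ := fun s =>
    ∑ j ∈ Finset.range (n + 1), ‖(szegoPoly a j).eval (z s)‖ ^ 2 / szegoNormSq a j
  have hKpos (s : ι) : 0 < K s :=
    Finset.sum_pos'
      (fun j hj => div_nonneg (sq_nonneg _) (hnormSq j (Finset.mem_range_succ_iff.1 hj)).le)
      ⟨0, by simp, by simp [szegoPoly_zero, szegoNormSq]⟩
  let V : Matrix ι (Fin (n + 1)) ℂ := .of fun s j => (szegoPoly a j).eval (z s)
  let W : Matrix (Fin (n + 1)) ι ℂ := .of fun j t =>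
    starRingEnd ℂ ((szegoPoly a j).eval (z t)) / szegoNormSq a j * (K t : ℂ)⁻¹
  have hVW : V * W = 1 := by
    ext s t
    have hentry : (V * W) s t = christoffelDarbouxKernel a (n + 1) (z s) (z t) * (K t : ℂ)⁻¹ := by
      simp only [Matrix.mul_apply, V, W, Matrix.of_apply, christoffelDarbouxKernel,
        Finset.sum_range, Finset.sum_mul, mul_assoc, mul_div_assoc]
    rcases eq_or_ne s t with rfl | hst
    · rw [hentry, christoffelDarbouxKernel_self, Matrix.one_apply_eq]
      exact mul_inv_cancel₀ (mod_cast (hKpos s).ne')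
    · rw [hentry, christoffelDarbouxKernel_eq_zero (hz s) (hinj.ne hst) (hnormSq n le_rfl).ne' han
        (hroot s) (hroot t), zero_mul, Matrix.one_apply_ne hst]
  have hWV : W * V = 1 := (Matrix.mul_eq_one_comm_of_card_eq _ _ _ (by simp [hι])).1 hVW
  refine ⟨fun s => (K s)⁻¹, fun s => inv_pos.2 (hKpos s), fun j hj => ?_⟩
  have h := congrFun₂ hWV 0 ⟨j, hj⟩
  simpa [Matrix.mul_apply, Matrix.one_apply, V, W, szegoPoly_zero, szegoNormSq,
    discreteForm_one_apply, Fin.ext_iff, eq_comm] using h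

end DiscreteForm

section DegreeSequence

theorem linearMap_eq_of_eq_on_sequence {K M : Type*} [Field K] [AddCommGroup M] [Module K M]
    {f g : K[X] →ₗ[K] M} (S : Polynomial.Sequence K) {N : ℕ}
    (h : ∀ k < N, f (S k) = g (S k)) {P : K[X]} (hP : P.degree < N) : f P = g P := by
  rw [← mem_degreeLT, ← S.span_degreeLT fun i _ => (leadingCoeff_ne_zero.2 (S.ne_zero i)).isUnit]
    at hP
  refine LinearMap.eqOn_span ?_ hP
  rintro _ ⟨k, hk, rfl⟩
  exact h k hk

theorem linearMap_eq_of_eq_on_X_pow {K M : Type*} [Field K] [AddCommGroup M] [Module K M]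
    {f g : K[X] →ₗ[K] M} {N : ℕ} (h : ∀ k < N, f (X ^ k) = g (X ^ k)) {P : K[X]}
    (hP : P.degree < N) : f P = g P :=
  linearMap_eq_of_eq_on_sequence ⟨fun k => X ^ k, degree_X_pow⟩ h hP

end DegreeSequence

section Equivalence

variable {ι : Type*} [Fintype ι] {L : ℂ[X] →ₗ[ℂ] ℂ} {a b : ℕ → ℂ} {m n : ℕ} {z : ι → ℂ}

theorem exists_szegoPoly_of_quadrature {μ : ι → ℝ} (hι : Fintype.card ι = n + 1)
    (hL : ∀ j, j + m < n → L (szegoPoly a (j + 1)) = 0) (hz : ∀ s, ‖z s‖ = 1)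
    (hinj : Function.Injective z) (hμ : ∀ s, 0 < μ s)
    (hmoment : ∀ k, k + m < n + 1 → L (X ^ k) = ∑ s, (μ s : ℂ) * z s ^ k) :
    ∃ b : ℕ → ℂ, (∀ j < n, ‖b j‖ < 1) ∧ ‖b n‖ = 1 ∧ (∀ j, j + m < n → b j = a j) ∧
      szegoPoly b (n + 1) = ∏ s, (X - C (z s)) := by
  have hagree {P : ℂ[X]} (hP : P.degree < (n + 1 - m : ℕ)) : L P = discreteForm μ z 1 P :=
    linearMap_eq_of_eq_on_X_pow (fun k hk => by
      simp [hmoment k (by omega), discreteForm_one_apply]) hP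
  have horth (j : ℕ) (hj : j < n - m) : discreteForm μ z 1 (szegoPoly a (j + 1)) = 0 := by
    rw [← hagree (by rw [degree_szegoPoly]; exact mod_cast (by omega)), hL j (by omega)]
  have hdefinite (P : ℂ[X]) (hP : P ≠ 0) (hdeg : P.degree < (n + 1 : ℕ)) :
      discreteForm μ z P P ≠ 0 := fun h =>
    (discreteForm_apply_self_re_pos hμ hinj hP (hι ▸ hdeg)).ne' (by rw [h, Complex.zero_re])
  obtain ⟨b, hba, hb⟩ :=
    (isHermitianToeplitz_discreteForm μ hz).exists_orthogonal_szegoPoly_extending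
      (by omega) horth hdefinite
  rw [← hι] at hb
  refine ⟨b, fun j hj => norm_lt_one_of_discreteForm_orthogonal hμ hz hinj hb (by omega),
    norm_eq_one_of_discreteForm_orthogonal hμ hz hinj hb hι.symm,
    fun j hj => hba j (by omega), ?_⟩
  rw [← hι, szegoPoly_card_eq_nodal hμ hz hinj hb, Lagrange.nodal]

theorem exists_quadrature_of_szegoPoly (hι : Fintype.card ι = n + 1) (hL1 : L 1 = 1)
    (hL : ∀ j, j + m < n → L (szegoPoly a (j + 1)) = 0) (hz : ∀ s, ‖z s‖ = 1)
    (hinj : Function.Injective z) (hb : ∀ j < n, ‖b j‖ < 1) (hbn : ‖b n‖ = 1)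
    (hba : ∀ j, j + m < n → b j = a j) (hprod : szegoPoly b (n + 1) = ∏ s, (X - C (z s))) :
    ∃ μ : ι → ℝ, (∀ s, 0 < μ s) ∧
      ∀ k, k + m < n + 1 → L (X ^ k) = ∑ s, (μ s : ℂ) * z s ^ k := by
  obtain ⟨μ, hμ, hquad⟩ := exists_szego_quadrature hι hb hbn hz hinj fun s => by
    rw [hprod, ← Lagrange.nodal, Lagrange.eval_nodal_at_node (Finset.mem_univ s)]
  have hagree (j : ℕ) (hj : j < n + 1 - m) :
      L (szegoPoly a j) = discreteForm μ z 1 (szegoPoly a j) := by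
    rw [← szegoPoly_congr fun i hi => hba i (by omega), hquad j (by omega),
      szegoPoly_congr fun i hi => hba i (by omega)]
    cases j with
    | zero => exact hL1
    | succ j => exact hL j (by omega)
  refine ⟨μ, hμ, fun k hk => ?_⟩
  rw [linearMap_eq_of_eq_on_sequence ⟨szegoPoly a, degree_szegoPoly a⟩ hagree
    (by rw [degree_X_pow]; exact mod_cast (by omega))]
  simp [discreteForm_one_apply]

theorem exists_recurrence_iff_exists_szegoPoly (p : ℂ[X]) :
    (∃ b : ℕ → ℂ, (∀ j < n, ‖b j‖ < 1) ∧ (∀ j, j + m < n → b j = a j) ∧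
      ∃ Φ : ℕ → ℂ[X], Φ 0 = 1 ∧ (∀ j < n, Φ (j + 1) = X * Φ j - C (b j) * pstar j (Φ j)) ∧
        ∃ η : ℂ, ‖η‖ = 1 ∧ X * Φ n + C η * pstar n (Φ n) = p) ↔
    ∃ b : ℕ → ℂ, (∀ j < n, ‖b j‖ < 1) ∧ ‖b n‖ = 1 ∧ (∀ j, j + m < n → b j = a j) ∧
      szegoPoly b (n + 1) = p := by
  constructor
  · rintro ⟨b, hb, hba, Φ, hΦ0, hrec, η, hη, rfl⟩
    have hupdate (j : ℕ) (hj : j < n) : Function.update b n (-η) j = b j :=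
      Function.update_of_ne hj.ne _ _
    refine ⟨Function.update b n (-η), fun j hj => by rw [hupdate j hj]; exact hb j hj, by simp [hη],
      fun j hj => by rw [hupdate j (by omega), hba j hj], ?_⟩
    rw [szegoPoly_succ, szegoPoly_congr hupdate, Function.update_self,
      ← eq_szegoPoly_of_recurrence hΦ0 hrec n le_rfl, C_neg, neg_mul, sub_neg_eq_add]
  · rintro ⟨b, hb, hbn, hba, rfl⟩
    refine ⟨b, hb, hba, szegoPoly b, szegoPoly_zero b, fun j _ => szegoPoly_succ b j, -b n,
      by rw [norm_neg, hbn], ?_⟩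
    rw [szegoPoly_succ, C_neg, neg_mul, ← sub_eq_add_neg]

theorem stmt4_general (hL1 : L 1 = 1) (Φ : ℕ → ℂ[X]) (hΦ0 : Φ 0 = 1)
    (hΦ : ∀ j, L (Φ (j + 1)) = 0)
    (hrec : ∀ j, Φ (j + 1) = X * Φ j - C (a j) * pstar j (Φ j))
    (hn : 1 ≤ n) (hι : Fintype.card ι = n) (hz : ∀ s, ‖z s‖ = 1) (hinj : Function.Injective z) :
    (∃ μ : ι → ℝ, (∀ s, 0 < μ s) ∧
        ∀ k, k + m < n → L (X ^ k) = ∑ s, (μ s : ℂ) * z s ^ k) ↔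
    (∃ at_ : ℕ → ℂ,
        (∀ j < n - 1, ‖at_ j‖ < 1) ∧ (∀ j, j + m + 1 < n → at_ j = a j) ∧
        ∃ Φt : ℕ → ℂ[X], Φt 0 = 1 ∧
          (∀ j < n - 1, Φt (j + 1) = X * Φt j - C (at_ j) * pstar j (Φt j)) ∧
          ∃ η : ℂ, ‖η‖ = 1 ∧
            X * Φt (n - 1) + C η * pstar (n - 1) (Φt (n - 1)) = ∏ s, (X - C (z s))) := by
  obtain ⟨n, rfl⟩ := Nat.exists_eq_add_of_le' hn
  obtain rfl : Φ = szegoPoly a :=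
    funext fun j => eq_szegoPoly_of_recurrence hΦ0 (fun i _ => hrec i) j le_rfl
  simp only [Nat.add_sub_cancel, Nat.add_lt_add_iff_right, exists_recurrence_iff_exists_szegoPoly]
  constructor
  · rintro ⟨μ, hμ, hmoment⟩
    exact exists_szegoPoly_of_quadrature hι (fun j _ => hΦ j) hz hinj hμ hmoment
  · rintro ⟨b, hb, hbn, hba, hprod⟩
    exact exists_quadrature_of_szegoPoly hι hL1 (fun j _ => hΦ j) hz hinj hb hbn hba hprod

end Equivalence

section CircleFunctional

theorem integrable_eval_exp_I_mul (σ : Measure ℝ) [IsFiniteMeasure σ] (P : ℂ[X]) :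
    Integrable (fun φ : ℝ => P.eval (Complex.exp (Complex.I * φ))) σ := by
  obtain ⟨M, hM⟩ := (isCompact_sphere (0 : ℂ) 1).exists_bound_of_continuousOn
    P.continuous.continuousOn
  have hcont : Continuous fun φ : ℝ => P.eval (Complex.exp (Complex.I * φ)) := by fun_prop
  exact .of_bound hcont.aestronglyMeasurable M (.of_forall fun φ => hM _ (by simp))

/-- Integration of polynomials over the unit circle, parametrized by the angle, against the
measure `σ / (2π)`. -/
noncomputable def circleFunctional (σ : Measure ℝ) [IsFiniteMeasure σ] : ℂ[X] →ₗ[ℂ] ℂ where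
  toFun P := (1 / (2 * π)) * ∫ φ, P.eval (Complex.exp (Complex.I * φ)) ∂σ
  map_add' P Q := by
    simp only [eval_add, mul_add,
      integral_add (integrable_eval_exp_I_mul σ P) (integrable_eval_exp_I_mul σ Q)]
  map_smul' c P := by
    simp only [eval_smul, integral_smul, mul_smul_comm, RingHom.id_apply]

theorem circleFunctional_apply (σ : Measure ℝ) [IsFiniteMeasure σ] (P : ℂ[X]) :
    circleFunctional σ P = (1 / (2 * π)) * ∫ φ, P.eval (Complex.exp (Complex.I * φ)) ∂σ := rfl

theorem circleFunctional_one {σ : Measure ℝ} [IsFiniteMeasure σ]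
    (hnorm : (1 / (2 * π)) * ∫ _φ, (1 : ℝ) ∂σ = 1) : circleFunctional σ 1 = 1 := by
  have h := congrArg ((↑) : ℝ → ℂ) hnorm
  simpa [circleFunctional_apply] using h

theorem exp_neg_neg_natCast_mul_I (k : ℕ) (x : ℝ) :
    Complex.exp (-((-k : ℤ) : ℂ) * Complex.I * x) = Complex.exp (Complex.I * x) ^ k := by
  rw [← Complex.exp_nat_mul]
  push_cast
  ring_nf

theorem exp_neg_natCast_mul_I (k : ℕ) (x : ℝ) :
    Complex.exp (-((k : ℤ) : ℂ) * Complex.I * x) =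
      starRingEnd ℂ (Complex.exp (Complex.I * x) ^ k) := by
  rw [← Complex.exp_nat_mul, ← Complex.exp_conj]
  simp [mul_assoc]

theorem forall_int_moment_eq_iff {ι : Type*} [Fintype ι] (σ : Measure ℝ)
    [IsFiniteMeasure σ] (μ φs : ι → ℝ) (m n : ℕ) :
    (∀ k : ℤ, |k| ≤ (n : ℤ) - m - 1 →
      (1 / (2 * (π : ℂ))) * ∫ φ : ℝ, Complex.exp (-(k : ℂ) * Complex.I * (φ : ℂ)) ∂σ =
        ∑ s, (μ s : ℂ) * Complex.exp (-(k : ℂ) * Complex.I * (φs s : ℂ))) ↔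
    ∀ k, k + m < n → circleFunctional σ (X ^ k) =
      ∑ s, (μ s : ℂ) * Complex.exp (Complex.I * (φs s : ℂ)) ^ k := by
  simp only [circleFunctional_apply, eval_pow, eval_X]
  constructor
  · intro h k hk
    simpa only [exp_neg_neg_natCast_mul_I] using h (-k) (by simp; omega)
  · intro h k hk
    obtain ⟨k, rfl | rfl⟩ := k.eq_nat_or_neg
    · have hconj := congrArg (starRingEnd ℂ) (h k (by simp at hk; omega))
      simp only [exp_neg_natCast_mul_I, integral_conj]
      simpa [Complex.conj_ofNat] using hconj
    · simpa only [exp_neg_neg_natCast_mul_I] using h k (by simp at hk; omega)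

theorem injective_exp_I_mul_of_mem_Ico {ι : Type*} {φs : ι → ℝ}
    (hinj : Function.Injective φs)
    (hrange : ∀ s, φs s ∈ Set.Ico 0 (2 * π)) :
    Function.Injective fun s => Complex.exp (Complex.I * (φs s : ℂ)) := by
  intro s t hst
  have hcircle : Circle.exp (φs s) = Circle.exp (φs t) := by
    ext
    simpa [mul_comm] using hst
  exact hinj (Circle.exp_injOn_Ico (by simp) (hrange s) (hrange t) hcircle)

end CircleFunctional

theorem stmt4
    (σ : Measure ℝ) [IsFiniteMeasure σ]
    (hsupp : σ (Set.Icc 0 (2 * π))ᶜ = 0)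
    (hnorm : (1 / (2 * π)) * ∫ _φ, (1 : ℝ) ∂σ = 1)
    -- the orthogonal polynomials `Φ` and their Verblunsky coefficients `a`
    (Φ : ℕ → Polynomial ℂ) (hΦ0 : Φ 0 = 1)
    (hΦmonic : ∀ k, (Φ k).Monic) (hΦdeg : ∀ k, (Φ k).natDegree = k)
    (hΦorth : ∀ k : ℕ, ∀ j < k,
      ∫ φ : ℝ, Complex.exp (-(j : ℂ) * Complex.I * (φ : ℂ)) *
        (Φ k).eval (Complex.exp (Complex.I * (φ : ℂ))) ∂σ = 0)
    (a : ℕ → ℂ) (ha : ∀ j, ‖a j‖ < 1)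
    (hrec : ∀ j, Φ (j + 1) = X * Φ j - C (a j) * pstar j (Φ j))
    -- the nodes
    (n : ℕ) (hn : 1 ≤ n) (m : ℕ) (hm : m ≤ n - 1)
    (φs : Fin n → ℝ) (hmono : StrictMono φs)
    (hrange : ∀ s, φs s ∈ Set.Ico 0 (2 * π)) :
    -- (a)
    (∃ μ : Fin n → ℝ, (∀ s, 0 < μ s) ∧
        ∀ k : ℤ, |k| ≤ (n : ℤ) - m - 1 →
          (1 / (2 * (π : ℂ))) * ∫ φ : ℝ, Complex.exp (-(k : ℂ) * Complex.I * (φ : ℂ)) ∂σ =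
            ∑ s, (μ s : ℂ) * Complex.exp (-(k : ℂ) * Complex.I * (φs s : ℂ))) ↔
    -- (b)
    (∃ at_ : ℕ → ℂ,
        (∀ j < n - 1, ‖at_ j‖ < 1) ∧ (∀ j, j + m + 1 < n → at_ j = a j) ∧
        ∃ Φt : ℕ → Polynomial ℂ, Φt 0 = 1 ∧
          (∀ j < n - 1, Φt (j + 1) = X * Φt j - C (at_ j) * pstar j (Φt j)) ∧
          ∃ η : ℂ, ‖η‖ = 1 ∧
            X * Φt (n - 1) + C η * pstar (n - 1) (Φt (n - 1)) =
              ∏ s, (X - C (Complex.exp (Complex.I * (φs s : ℂ))))) := by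
  simp only [forall_int_moment_eq_iff]
  exact stmt4_general (circleFunctional_one hnorm) Φ hΦ0
    (fun j => by simpa [circleFunctional_apply] using hΦorth (j + 1) 0 j.succ_pos) hrec hn
    (Fintype.card_fin n) (fun s => Complex.norm_exp_I_mul_ofReal (φs s))
    (injective_exp_I_mul_of_mem_Ico hmono.injective hrange)
end

section
/- Let n ∈ ℕ, 0 ≤ m ≤ n−1, 0 ≤ φ₁ < φ₂ < ⋯ < φ_n < 2π, and let c_k = (1/2π)∫₀^{2π} e^{−ikφ} dσ(φ). The following are equivalent: (a) there exist positive weights μ₁,…,μ_n > 0 with c_k = Σ_{s=1}^n μ_s e^{−ikφ_s} for all integers k with |k| ≤ n−m−1; (d) there exist a monic polynomial p_{n−1}(z) = z^{n−1} + ⋯ having all its zeros in the open unit disk 𝔻 and an η ∈ 𝕋 such that z p_{n−1}(z) + η p*_{n−1}(z) = ∏_{s=1}^n (z − e^{iφ_s}) and the power series of (η p*_{n−1}(z) − z p_{n−1}(z))/(η p*_{n−1}(z) + z p_{n−1}(z)) at z = 0 equals 1 + 2Σ_{k=1}^{n−m−1} c_k z^k + O(z^{n−m}). -/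
open MeasureTheory Real Polynomial

/-!
Put `Q = ∏ s, (X - ζ s)` with unimodular nodes `ζ s`. Weights `w s` of total mass one correspond to
monic polynomials `p` of degree one less than that of `Q` through `p / Q = ∑ s, w s / (z - ζ s)`,
that is `w s = p (ζ s) / Q' (ζ s)`. For real weights, the self-reversal of each `Q / (z - ζ s)` on
the circle gives `z p + η p* = Q` with `η = ∏ s, (-ζ s)`, so that
`(η p* - z p) / (η p* + z p) = 1 - 2 z p / Q = ∑ s, w s * (ζ s + z) / (ζ s - z)`,
and the Taylor coefficients of the right-hand side are `2 ∑ s, w s * ζ s ^ (-k)`.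

Positivity of the weights and the location of the zeros of `p` both come from
`1 / 2 ≤ Re (z / (z - a))` for `‖a‖ ≤ ‖z‖`. If `w > 0` and `1 ≤ ‖z‖`, then
`Re (z p / Q) = ∑ s, w s * Re (z / (z - ζ s))` is positive, so `p` has no zero outside the disk.
Conversely, differentiating `Q = z p + η p*` at a node `z` gives
`Q' / p = 1 - deg p + 2 Re (z p' / p)`, which is at least `1` when all zeros of `p` lie in the disk.
-/

open scoped Topology ComplexConjugate

section Reversal

variable {N : ℕ} {P Q : ℂ[X]} {z : ℂ}

lemma eq_of_eval_eq_of_norm_eq_one (h : ∀ z : ℂ, ‖z‖ = 1 → P.eval z = Q.eval z) : P = Q := by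
  have hinf : (Metric.sphere (0 : ℂ) 1).Infinite :=
    (isPreconnected_sphere (by simp [Complex.rank_real_complex]) 0 1).infinite_of_nontrivial
      ⟨1, by simp, -1, by simp, by norm_num⟩
  exact eq_of_infinite_eval_eq P Q (hinf.mono fun z hz => h z (by simpa using hz))

lemma eval_pstar_of_norm_eq_one (hP : P.natDegree ≤ N) (hz : ‖z‖ = 1) :
    (pstar N P).eval z = z ^ N * conj (P.eval z) := by
  have hz0 : z ≠ 0 := ne_zero_of_norm_ne_zero (by simp [hz])
  let _ : Invertible z⁻¹ := invertibleOfNonzero (inv_ne_zero hz0)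
  have hreflect := eval₂_reflect_mul_pow (RingHom.id ℂ) z⁻¹ N (P.map (starRingEnd ℂ))
    (natDegree_map_le.trans hP)
  rw [invOf_eq_inv, inv_inv, ← eval, ← eval, Complex.inv_eq_conj hz, eval_map_apply,
    ← Complex.inv_eq_conj hz] at hreflect
  rw [pstar, ← hreflect, inv_pow]
  field_simp

lemma X_mul_derivative_pstar (hP : P.natDegree ≤ N) :
    X * derivative (pstar N P) = (N : ℂ[X]) * pstar N P - pstar N (X * derivative P) := by
  have coeff_X_mul_derivative (R : ℂ[X]) (k : ℕ) :
      (X * derivative R).coeff k = k * R.coeff k := by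
    cases k <;> simp [coeff_derivative, mul_comm]
  ext k
  simp only [pstar, coeff_X_mul_derivative, coeff_sub, coeff_natCast_mul, coeff_reflect, coeff_map,
    map_mul, map_natCast]
  rcases le_or_gt k N with hk | hk
  · rw [revAt_le hk, Nat.cast_sub hk]
    ring
  · simp [revAt_eq_self_of_lt hk, coeff_eq_zero_of_natDegree_lt (hP.trans_lt hk)]

lemma mul_eval_derivative_pstar_of_norm_eq_one (hP : P.natDegree ≤ N) (hz : ‖z‖ = 1) :
    z * (derivative (pstar N P)).eval z =
      z ^ N * conj (N * P.eval z - z * (derivative P).eval z) := by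
  have hXP : (X * derivative P).natDegree ≤ N := by
    rcases eq_or_ne (derivative P) 0 with h0 | h0
    · simp [h0]
    · have := natDegree_derivative_lt (p := P) (fun h => h0 (derivative_of_natDegree_zero h))
      rw [natDegree_X_mul h0]
      omega
  have h := congrArg (eval z) (X_mul_derivative_pstar hP)
  rw [eval_sub, eval_mul, eval_mul, eval_X, eval_natCast, eval_pstar_of_norm_eq_one hP hz,
    eval_pstar_of_norm_eq_one hXP hz, eval_mul, eval_X] at h
  rw [h]
  simp only [map_sub, map_mul, map_natCast]
  ring

end Reversal

section CauchyNumerator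

variable {ι F : Type*} [Fintype ι] [Field F] {ζ w : ι → F}

lemma eval_derivative_nodal_node_ne_zero (hζ : Function.Injective ζ) (s : ι) :
    (derivative (Lagrange.nodal .univ ζ)).eval (ζ s) ≠ 0 := by
  classical
  rw [Lagrange.eval_nodal_derivative_eval_node_eq (Finset.mem_univ s)]
  exact Lagrange.eval_nodal_not_at_node fun t ht h => Finset.ne_of_mem_erase ht (hζ h.symm)

variable [DecidableEq ι]

/-- The numerator of the Cauchy transform `∑ s, w s / (z - ζ s)` of the measure with mass `w s` at
each `ζ s`, over the common denominator `∏ s, (z - ζ s)`. -/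
noncomputable def cauchyNumerator (ζ w : ι → F) : F[X] :=
  ∑ s, C (w s) * Lagrange.nodal (Finset.univ.erase s) ζ

lemma natDegree_cauchyNumerator_le : (cauchyNumerator ζ w).natDegree ≤ Fintype.card ι - 1 :=
  natDegree_sum_le_of_forall_le _ _ fun s _ =>
    (natDegree_C_mul_le _ _).trans (by simp [Lagrange.natDegree_nodal])

lemma coeff_cauchyNumerator : (cauchyNumerator ζ w).coeff (Fintype.card ι - 1) = ∑ s, w s := by
  have hlead (s : ι) :
      (Lagrange.nodal (Finset.univ.erase s) ζ).coeff (Fintype.card ι - 1) = 1 := by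
    have h := (Lagrange.nodal_monic (s := Finset.univ.erase s) (v := ζ)).coeff_natDegree
    rwa [Lagrange.natDegree_nodal, Finset.card_erase_of_mem (Finset.mem_univ s),
      Finset.card_univ] at h
  simp [cauchyNumerator, finsetSum_coeff, hlead]

lemma eval_cauchyNumerator_node (s : ι) :
    (cauchyNumerator ζ w).eval (ζ s) = w s * (derivative (Lagrange.nodal .univ ζ)).eval (ζ s) := by
  rw [Lagrange.eval_nodal_derivative_eval_node_eq (Finset.mem_univ s), cauchyNumerator,
    eval_finsetSum, Finset.sum_eq_single s]
  · rw [eval_C_mul]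
  · intro t _ hts
    rw [eval_C_mul, Lagrange.eval_nodal_at_node (by simp [hts.symm]), mul_zero]
  · simp

lemma eval_cauchyNumerator {z : F} (hz : ∀ s, z ≠ ζ s) :
    (cauchyNumerator ζ w).eval z = (Lagrange.nodal .univ ζ).eval z * ∑ s, w s / (z - ζ s) := by
  rw [cauchyNumerator, eval_finsetSum, Finset.mul_sum]
  refine Finset.sum_congr rfl fun s _ => ?_
  have hzs : z - ζ s ≠ 0 := sub_ne_zero.2 (hz s)
  rw [Lagrange.nodal_eq_mul_nodal_erase (Finset.mem_univ s)]
  simp only [eval_mul, eval_C, eval_sub, eval_X]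
  field_simp

lemma eq_cauchyNumerator [Nonempty ι] (hζ : Function.Injective ζ) {p : F[X]}
    (hp : p.natDegree ≤ Fintype.card ι - 1)
    (hw : ∀ s, p.eval (ζ s) = w s * (derivative (Lagrange.nodal .univ ζ)).eval (ζ s)) :
    p = cauchyNumerator ζ w := by
  have hdegree {q : F[X]} (hq : q.natDegree ≤ Fintype.card ι - 1) :
      q.degree < (Finset.univ : Finset ι).card :=
    degree_le_natDegree.trans_lt <| Nat.cast_lt.2 <| hq.trans_lt <|
      Nat.sub_lt Fintype.card_pos one_pos
  exact eq_of_degrees_lt_of_eval_index_eq .univ hζ.injOn (hdegree hp)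
    (hdegree natDegree_cauchyNumerator_le) fun s _ => by rw [hw, eval_cauchyNumerator_node]

lemma herglotz_eq_sum {q : F[X]} {η : F}
    (hnodal : X * cauchyNumerator ζ w + C η * q = Lagrange.nodal .univ ζ) (hw : ∑ s, w s = 1)
    {z : F} (hz : ∀ s, z ≠ ζ s) :
    (η * q.eval z - z * (cauchyNumerator ζ w).eval z) /
        (η * q.eval z + z * (cauchyNumerator ζ w).eval z) =
      ∑ s, w s * ((ζ s + z) / (ζ s - z)) := by
  have hQ : (Lagrange.nodal .univ ζ).eval z ≠ 0 := Lagrange.eval_nodal_not_at_node fun s _ => hz s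
  have hsplit := congrArg (eval z) hnodal
  rw [eval_add, eval_mul, eval_X, eval_C_mul] at hsplit
  have hkernel (s : ι) : w s * ((ζ s + z) / (ζ s - z)) = w s - 2 * z * (w s / (z - ζ s)) := by
    have h1 := sub_ne_zero.2 (hz s)
    have h2 := sub_ne_zero.2 (hz s).symm
    field_simp
    ring
  simp_rw [hkernel]
  rw [add_comm (η * _), hsplit, div_eq_iff hQ, Finset.sum_sub_distrib, hw, ← Finset.mul_sum]
  linear_combination hsplit - 2 * z * eval_cauchyNumerator (w := w) hz

end CauchyNumerator

section HalfPlane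

lemma one_half_le_re_inv_one_sub {u : ℂ} (hu : ‖u‖ ≤ 1) (h1 : u ≠ 1) :
    1 / 2 ≤ ((1 - u)⁻¹).re := by
  have hpos : 0 < Complex.normSq (1 - u) := Complex.normSq_pos.2 (sub_ne_zero.2 h1.symm)
  have hle : Complex.normSq u ≤ 1 := by
    rw [Complex.normSq_eq_norm_sq]
    exact pow_le_one₀ (norm_nonneg u) hu
  rw [Complex.inv_re, div_le_div_iff₀ two_pos hpos]
  simp only [Complex.normSq_apply, Complex.sub_re, Complex.sub_im, Complex.one_re,
    Complex.one_im] at hle ⊢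
  linarith

lemma one_half_le_re_div_sub {a z : ℂ} (haz : ‖a‖ ≤ ‖z‖) (hz : z ≠ a) :
    1 / 2 ≤ (z / (z - a)).re := by
  have hz0 : z ≠ 0 := by
    rintro rfl
    exact hz (norm_le_zero_iff.1 (haz.trans norm_zero.le)).symm
  have hinv : z / (z - a) = (1 - a / z)⁻¹ := by
    rw [one_sub_div hz0, inv_div]
  rw [hinv]
  refine one_half_le_re_inv_one_sub ?_ fun h => hz ((div_eq_one_iff_eq hz0).1 h).symm
  rw [norm_div]
  exact div_le_one_of_le₀ haz (norm_nonneg z)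

lemma natDegree_div_two_le_re_mul_derivative_div {p : ℂ[X]} {z : ℂ}
    (hroots : ∀ a ∈ p.roots, ‖a‖ ≤ ‖z‖) (hz : p.eval z ≠ 0) :
    (p.natDegree : ℝ) / 2 ≤ (z * ((derivative p).eval z / p.eval z)).re := by
  have hsplits := IsAlgClosed.splits p
  have hterm : ∀ x ∈ p.roots.map fun a => (z * (1 / (z - a))).re, (1 / 2 : ℝ) ≤ x := by
    simp only [Multiset.mem_map, forall_exists_index, and_imp, mul_one_div]
    rintro _ a ha rfl
    refine one_half_le_re_div_sub (hroots a ha) ?_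
    rintro rfl
    exact hz (isRoot_of_mem_roots ha)
  have hsum := Multiset.card_nsmul_le_sum hterm
  rw [Multiset.card_map, ← hsplits.natDegree_eq_card_roots, nsmul_eq_mul] at hsum
  rw [hsplits.eval_derivative_div_eval_of_ne_zero hz, ← Multiset.sum_map_mul_left,
    ← Complex.coe_reAddGroupHom, map_multiset_sum, Multiset.map_map]
  exact (div_eq_mul_one_div _ _).trans_le hsum

end HalfPlane

section UnimodularNodes

variable {ι : Type*} {ζ : ι → ℂ}

lemma pstar_nodal (hζ : ∀ s, ‖ζ s‖ = 1) (S : Finset ι) :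
    C (∏ s ∈ S, -ζ s) * pstar S.card (Lagrange.nodal S ζ) = Lagrange.nodal S ζ := by
  refine eq_of_eval_eq_of_norm_eq_one fun z hz => ?_
  have hz0 : z ≠ 0 := ne_zero_of_norm_ne_zero (by simp [hz])
  rw [eval_C_mul, eval_pstar_of_norm_eq_one Lagrange.natDegree_nodal.le hz, Lagrange.eval_nodal,
    map_prod, ← Finset.prod_const, ← Finset.prod_mul_distrib, ← Finset.prod_mul_distrib]
  refine Finset.prod_congr rfl fun s _ => ?_
  have hs0 : ζ s ≠ 0 := ne_zero_of_norm_ne_zero (by simp [hζ s])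
  rw [map_sub, ← Complex.inv_eq_conj hz, ← Complex.inv_eq_conj (hζ s)]
  field_simp
  ring

variable [Fintype ι] [DecidableEq ι] {w : ι → ℝ}

lemma X_mul_cauchyNumerator_add_pstar (hζ : ∀ s, ‖ζ s‖ = 1) (hw : ∑ s, w s = 1) :
    X * cauchyNumerator ζ (fun s => (w s : ℂ)) +
        C (∏ s, -ζ s) * pstar (Fintype.card ι - 1) (cauchyNumerator ζ fun s => (w s : ℂ)) =
      Lagrange.nodal .univ ζ := by
  refine eq_of_eval_eq_of_norm_eq_one fun z hz => ?_
  have hw' : ∑ s, (w s : ℂ) = 1 := mod_cast hw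
  have hself (s : ι) : (∏ t, -ζ t) * (z ^ (Fintype.card ι - 1) *
      conj ((Lagrange.nodal (Finset.univ.erase s) ζ).eval z)) =
        -ζ s * (Lagrange.nodal (Finset.univ.erase s) ζ).eval z := by
    have h := congrArg (eval z) (pstar_nodal hζ (Finset.univ.erase s))
    rw [eval_C_mul, eval_pstar_of_norm_eq_one Lagrange.natDegree_nodal.le hz,
      Finset.card_erase_of_mem (Finset.mem_univ s), Finset.card_univ] at h
    rw [← Finset.mul_prod_erase _ _ (Finset.mem_univ s), mul_assoc, h]
  rw [eval_add, eval_mul, eval_X, eval_C_mul,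
    eval_pstar_of_norm_eq_one natDegree_cauchyNumerator_le hz,
    ← one_mul (eval z (Lagrange.nodal _ _)), ← hw', Finset.sum_mul, cauchyNumerator,
    eval_finsetSum, map_sum, Finset.mul_sum, Finset.mul_sum, Finset.mul_sum,
    ← Finset.sum_add_distrib]
  refine Finset.sum_congr rfl fun s hs => ?_
  rw [Lagrange.nodal_eq_mul_nodal_erase hs]
  simp only [eval_mul, eval_sub, eval_X, eval_C, map_mul, Complex.conj_ofReal]
  linear_combination (w s : ℂ) * hself s

lemma norm_lt_one_of_eval_cauchyNumerator_eq_zero [Nonempty ι] (hζ : ∀ s, ‖ζ s‖ = 1)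
    (hinj : Function.Injective ζ) (hw : ∀ s, 0 < w s) {z : ℂ}
    (hz : (cauchyNumerator ζ fun s => (w s : ℂ)).eval z = 0) : ‖z‖ < 1 := by
  by_contra! hz1
  have hne : ∀ s, z ≠ ζ s := by
    rintro s rfl
    rw [eval_cauchyNumerator_node] at hz
    exact mul_ne_zero (Complex.ofReal_ne_zero.2 (hw s).ne')
      (eval_derivative_nodal_node_ne_zero hinj s) hz
  rw [eval_cauchyNumerator hne, mul_eq_zero_iff_left
    (Lagrange.eval_nodal_not_at_node fun s _ => hne s)] at hz
  have hsum : ∑ s, w s * (z / (z - ζ s)).re = 0 := by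
    have h := congrArg (fun x => (z * x).re) hz
    simpa only [Finset.mul_sum, mul_div_left_comm z, Complex.re_sum, Complex.re_ofReal_mul,
      mul_zero, Complex.zero_re] using h
  refine (Finset.sum_pos (fun s _ => ?_) Finset.univ_nonempty).ne' hsum
  have := one_half_le_re_div_sub ((hζ s).trans_le hz1) (hne s)
  exact mul_pos (hw s) (by linarith)

lemma eval_derivative_eq_mul_of_isRoot {p Q : ℂ[X]} {η z : ℂ}
    (hQ : X * p + C η * pstar p.natDegree p = Q) (hz : ‖z‖ = 1) (hpz : p.eval z ≠ 0)
    (hQz : Q.eval z = 0) :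
    (derivative Q).eval z =
      ((2 * (z * ((derivative p).eval z / p.eval z)).re - p.natDegree + 1 : ℝ) : ℂ) *
        p.eval z := by
  set v := z * ((derivative p).eval z / p.eval z) with hv
  have hz0 : z ≠ 0 := ne_zero_of_norm_ne_zero (by simp [hz])
  have hpv : z * (derivative p).eval z = p.eval z * v := by
    rw [hv]
    field_simp
  have hroot : z * p.eval z + η * (z ^ p.natDegree * conj (p.eval z)) = 0 := by
    rw [← hQz, ← hQ, eval_add, eval_mul, eval_X, eval_C_mul, eval_pstar_of_norm_eq_one le_rfl hz]
  have hderiv : (derivative Q).eval z =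
      p.eval z + z * (derivative p).eval z + η * (derivative (pstar p.natDegree p)).eval z := by
    simp [← hQ]
  have hstar := mul_eval_derivative_pstar_of_norm_eq_one (le_refl p.natDegree) hz
  rw [hpv, map_sub, map_mul, map_mul, map_natCast] at hstar
  have hre : ((2 * v.re - p.natDegree + 1 : ℝ) : ℂ) = v + conj v - p.natDegree + 1 := by
    rw [Complex.add_conj]
    push_cast
    ring
  rw [hre, hderiv, hpv]
  refine mul_left_cancel₀ hz0 ?_
  linear_combination η * hstar + (p.natDegree - conj v) * hroot

lemma exists_pos_eval_eq_mul_eval_derivative {p Q : ℂ[X]} {η z : ℂ}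
    (hroots : ∀ a : ℂ, p.eval a = 0 → ‖a‖ < 1) (hQ : X * p + C η * pstar p.natDegree p = Q)
    (hz : ‖z‖ = 1) (hQz : Q.eval z = 0) :
    ∃ r : ℝ, 0 < r ∧ p.eval z = r * (derivative Q).eval z := by
  have hpz : p.eval z ≠ 0 := fun h => (hroots z h).ne hz
  have hhalf := natDegree_div_two_le_re_mul_derivative_div
    (fun a ha => (hroots a (isRoot_of_mem_roots ha)).le.trans hz.ge) hpz
  set r : ℝ := 2 * (z * ((derivative p).eval z / p.eval z)).re - p.natDegree + 1 with hr
  have hpos : 0 < r := by linarith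
  refine ⟨r⁻¹, inv_pos.2 hpos, ?_⟩
  rw [eval_derivative_eq_mul_of_isRoot hQ hz hpz hQz, ← hr, Complex.ofReal_inv,
    inv_mul_cancel_left₀ (Complex.ofReal_ne_zero.2 hpos.ne')]

lemma exists_pos_weights_of_roots_lt_one [Nonempty ι] (hζ : ∀ s, ‖ζ s‖ = 1)
    (hinj : Function.Injective ζ) {p : ℂ[X]} {η : ℂ} (hmonic : p.Monic)
    (hdeg : p.natDegree = Fintype.card ι - 1) (hroots : ∀ a : ℂ, p.eval a = 0 → ‖a‖ < 1)
    (hnodal : X * p + C η * pstar (Fintype.card ι - 1) p = Lagrange.nodal .univ ζ) :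
    ∃ w : ι → ℝ, (∀ s, 0 < w s) ∧ ∑ s, w s = 1 ∧ p = cauchyNumerator ζ fun s => (w s : ℂ) := by
  choose w hpos hw using fun s => exists_pos_eval_eq_mul_eval_derivative hroots (hdeg ▸ hnodal)
    (hζ s) (Lagrange.eval_nodal_at_node (Finset.mem_univ s))
  have hp : p = cauchyNumerator ζ fun s => (w s : ℂ) := eq_cauchyNumerator hinj hdeg.le hw
  refine ⟨w, hpos, ?_, hp⟩
  have hlead := hmonic.coeff_natDegree
  rw [hdeg, hp, coeff_cauchyNumerator] at hlead
  exact_mod_cast hlead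

end UnimodularNodes

section Taylor

lemma exists_bound_near_zero_iff_isBigO {𝕜 E : Type*} [NormedField 𝕜] [SeminormedAddCommGroup E]
    {f : 𝕜 → E} {N : ℕ} :
    (∃ ε > (0 : ℝ), ∃ K : ℝ, ∀ z : 𝕜, ‖z‖ < ε → ‖f z‖ ≤ K * ‖z‖ ^ N) ↔
      f =O[𝓝 0] fun z => z ^ N := by
  simp only [Asymptotics.isBigO_iff, Metric.eventually_nhds_iff, dist_zero_right, norm_pow]
  exact ⟨fun ⟨ε, hε, K, h⟩ => ⟨K, ε, hε, fun z => h z⟩,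
    fun ⟨K, ε, hε, h⟩ => ⟨ε, hε, K, fun _ => @h _⟩⟩

lemma X_pow_dvd_of_isBigO {𝕜 : Type*} [NontriviallyNormedField 𝕜] {N : ℕ} {P : 𝕜[X]}
    (h : P.eval =O[𝓝[≠] 0] fun z => z ^ N) : X ^ N ∣ P := by
  induction N generalizing P with
  | zero => simp
  | succ N ih =>
    have hP0 : P.eval 0 = 0 := by
      have hpow : Filter.Tendsto (fun z : 𝕜 => z ^ (N + 1)) (𝓝[≠] 0) (𝓝 0) :=
        ((continuous_pow (N + 1)).tendsto' 0 0 (by simp)).mono_left nhdsWithin_le_nhds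
      exact tendsto_nhds_unique (P.continuous.continuousAt.tendsto.mono_left nhdsWithin_le_nhds)
        (h.trans_tendsto hpow)
    obtain ⟨R, rfl⟩ := X_dvd_iff.2 ((coeff_zero_eq_eval_zero P).trans hP0)
    rw [pow_succ']
    refine mul_dvd_mul_left X (ih ?_)
    have hne : ∀ᶠ z : 𝕜 in 𝓝[≠] 0, z ≠ 0 := self_mem_nhdsWithin
    have hR : (fun z => z * R.eval z) =O[𝓝[≠] 0] fun z => z ^ (N + 1) := by
      simpa only [eval_mul, eval_X] using! h
    refine ((Asymptotics.isBigO_mul_iff_isBigO_div hne).1 hR).congr' .rfl ?_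
    filter_upwards [hne] with z hz
    rw [pow_succ, mul_div_cancel_right₀ _ hz]

lemma isBigO_sum_Icc_mul_pow_iff {𝕜 : Type*} [NontriviallyNormedField 𝕜] {N : ℕ} {a : ℕ → 𝕜} :
    (fun z : 𝕜 => ∑ k ∈ Finset.Icc 1 N, a k * z ^ k) =O[𝓝 0] (fun z => z ^ (N + 1)) ↔
      ∀ k ∈ Finset.Icc 1 N, a k = 0 := by
  refine ⟨fun h k hk => ?_, fun h => ?_⟩
  · set P : 𝕜[X] := ∑ k ∈ Finset.Icc 1 N, C (a k) * X ^ k with hP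
    have hdvd : X ^ (N + 1) ∣ P := by
      refine X_pow_dvd_of_isBigO ((h.mono nhdsWithin_le_nhds).congr_left fun z => ?_)
      simp [hP, eval_finsetSum]
    have hcoeff : P.coeff k = a k := by
      simp [hP, finsetSum_coeff, coeff_X_pow, Finset.mem_Icc.1 hk]
    rw [← hcoeff]
    exact X_pow_dvd_iff.1 hdvd k (Nat.lt_succ_of_le (Finset.mem_Icc.1 hk).2)
  · refine (Asymptotics.isBigO_zero _ _).congr_left fun z => ?_
    exact (Finset.sum_eq_zero fun k hk => by rw [h k hk, zero_mul]).symm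

lemma add_div_sub_eq_sum_add {F : Type*} [Field F] {ζ z : F} (hζ : ζ ≠ 0) (hz : z ≠ ζ) (N : ℕ) :
    (ζ + z) / (ζ - z) =
      1 + ∑ k ∈ Finset.Icc 1 N, 2 * ζ ^ (-(k : ℤ)) * z ^ k +
        2 * ζ ^ (-(N : ℤ)) * z ^ (N + 1) / (ζ - z) := by
  have hsub : ζ - z ≠ 0 := sub_ne_zero.2 hz.symm
  simp only [zpow_neg, zpow_natCast]
  induction N with
  | zero =>
    rw [Finset.Icc_eq_empty (by norm_num), Finset.sum_empty]
    field_simp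
    ring
  | succ N ih =>
    rw [ih, Finset.sum_Icc_succ_top (by omega)]
    field_simp
    ring

lemma isBigO_add_div_sub_sub_sum {𝕜 : Type*} [NontriviallyNormedField 𝕜] {ζ : 𝕜} (hζ : ζ ≠ 0)
    (N : ℕ) :
    (fun z => (ζ + z) / (ζ - z) - (1 + ∑ k ∈ Finset.Icc 1 N, 2 * ζ ^ (-(k : ℤ)) * z ^ k))
      =O[𝓝 0] fun z => z ^ (N + 1) := by
  have hcont : ContinuousAt (fun z => 2 * ζ ^ (-(N : ℤ)) / (ζ - z)) 0 := by
    fun_prop (disch := simpa using hζ)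
  have hrem := (hcont.isBigO_one 𝕜).mul (Asymptotics.isBigO_refl (fun z : 𝕜 => z ^ (N + 1)) (𝓝 0))
  refine hrem.congr' ?_ (by simp)
  filter_upwards [eventually_ne_nhds hζ.symm] with z hz
  rw [add_div_sub_eq_sum_add hζ hz N]
  ring

lemma isBigO_herglotz_sub_iff {ι 𝕜 : Type*} [Fintype ι] [DecidableEq ι] [NontriviallyNormedField 𝕜]
    [NeZero (2 : 𝕜)] {ζ w : ι → 𝕜} (hζ : ∀ s, ζ s ≠ 0) {q : 𝕜[X]} {η : 𝕜}
    (hnodal : X * cauchyNumerator ζ w + C η * q = Lagrange.nodal .univ ζ) (hw : ∑ s, w s = 1)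
    {N : ℕ} {c : ℕ → 𝕜} :
    (fun z => (η * q.eval z - z * (cauchyNumerator ζ w).eval z) /
        (η * q.eval z + z * (cauchyNumerator ζ w).eval z) -
        (1 + ∑ k ∈ Finset.Icc 1 N, 2 * c k * z ^ k)) =O[𝓝 0] (fun z => z ^ (N + 1)) ↔
      ∀ k ∈ Finset.Icc 1 N, c k = ∑ s, w s * ζ s ^ (-(k : ℤ)) := by
  have htaylor : (fun z => (∑ s, w s * ((ζ s + z) / (ζ s - z) -
      (1 + ∑ k ∈ Finset.Icc 1 N, 2 * ζ s ^ (-(k : ℤ)) * z ^ k)))) =O[𝓝 0]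
        fun z => z ^ (N + 1) :=
    .fun_sum fun s _ => (isBigO_add_div_sub_sub_sum (hζ s) N).const_mul_left (w s)
  have hdiff (k : ℕ) : 2 * (∑ s, w s * ζ s ^ (-(k : ℤ)) - c k) = 0 ↔
      c k = ∑ s, w s * ζ s ^ (-(k : ℤ)) := by
    rw [mul_eq_zero_iff_left two_ne_zero, sub_eq_zero, eq_comm]
  simp_rw [← hdiff, ← isBigO_sum_Icc_mul_pow_iff]
  refine (Asymptotics.isBigO_congr ?_ .rfl).trans htaylor.add_iff_right
  filter_upwards [Filter.eventually_all.2 fun s => eventually_ne_nhds (hζ s).symm] with z hz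
  have hswap : ∑ s, w s * ∑ k ∈ Finset.Icc 1 N, 2 * ζ s ^ (-(k : ℤ)) * z ^ k =
      ∑ k ∈ Finset.Icc 1 N, 2 * (∑ s, w s * ζ s ^ (-(k : ℤ))) * z ^ k := by
    simp_rw [Finset.mul_sum, Finset.sum_mul]
    rw [Finset.sum_comm]
    exact Finset.sum_congr rfl fun k _ => Finset.sum_congr rfl fun s _ => by ring
  rw [herglotz_eq_sum hnodal hw hz]
  simp only [mul_sub, mul_one_add, sub_mul, Finset.sum_sub_distrib, Finset.sum_add_distrib, hw,
    hswap]
  ring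

end Taylor

section Moments

lemma forall_abs_le_eq_iff_of_neg_eq_star {α : Type*} [Star α] {a b : ℤ → α}
    (ha : ∀ k, a (-k) = star (a k)) (hb : ∀ k, b (-k) = star (b k)) {N : ℕ} :
    (∀ k : ℤ, |k| ≤ N → a k = b k) ↔ a 0 = b 0 ∧ ∀ k ∈ Finset.Icc 1 N, a k = b k := by
  refine ⟨fun h => ⟨h 0 (by simp), fun k hk => h k (by simpa using (Finset.mem_Icc.1 hk).2)⟩,
    fun ⟨h0, h⟩ k hk => ?_⟩
  have hnat (j : ℕ) (hj : j ≤ N) : a j = b j := by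
    rcases j.eq_zero_or_pos with rfl | hpos
    · exact h0
    · exact h j (Finset.mem_Icc.2 ⟨hpos, hj⟩)
  obtain ⟨j, rfl | rfl⟩ := k.eq_nat_or_neg
  · exact hnat j (by simpa using hk)
  · rw [ha, hb, hnat j (by simpa using hk)]

lemma sum_mul_zpow_neg_neg {ι : Type*} [Fintype ι] {ζ : ι → ℂ} (hζ : ∀ s, ‖ζ s‖ = 1) (w : ι → ℝ)
    (k : ℤ) :
    ∑ s, (w s : ℂ) * ζ s ^ (-(-k)) = conj (∑ s, (w s : ℂ) * ζ s ^ (-k)) := by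
  rw [map_sum]
  refine Finset.sum_congr rfl fun s _ => ?_
  rw [map_mul, Complex.conj_ofReal, map_zpow₀, ← Complex.inv_eq_conj (hζ s), inv_zpow']

/-- The `k`-th trigonometric moment `c_k` of `σ`, with the normalisation `1 / 2π`. -/
noncomputable def trigMoment (σ : Measure ℝ) (k : ℤ) : ℂ :=
  (1 / (2 * (π : ℂ))) * ∫ φ : ℝ, Complex.exp (-(k : ℂ) * Complex.I * (φ : ℂ)) ∂σ

variable {σ : Measure ℝ}

lemma trigMoment_zero : trigMoment σ 0 = ((1 / (2 * π) * ∫ _φ, (1 : ℝ) ∂σ : ℝ) : ℂ) := by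
  simp [trigMoment]

lemma trigMoment_neg (k : ℤ) : trigMoment σ (-k) = conj (trigMoment σ k) := by
  rw [trigMoment, trigMoment, map_mul, ← integral_conj]
  simp [← Complex.exp_conj, Complex.conj_ofNat]

lemma exp_neg_intCast_mul_I_mul (k : ℤ) (φ : ℝ) :
    Complex.exp (-(k : ℂ) * Complex.I * φ) = Complex.exp (Complex.I * φ) ^ (-k) := by
  rw [← Complex.exp_int_mul]
  push_cast
  ring_nf

lemma injOn_exp_I_mul_Ico :
    Set.InjOn (fun φ : ℝ => Complex.exp (Complex.I * φ)) (Set.Ico 0 (2 * π)) := by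
  intro x hx y hy hxy
  refine Circle.exp_injOn_Ico (by simp) hx hy (Circle.ext ?_)
  simpa [Circle.coe_exp, mul_comm] using hxy

end Moments

theorem stmt6_general {ι : Type*} [Fintype ι] [Nonempty ι] {ζ : ι → ℂ} (hζ : ∀ s, ‖ζ s‖ = 1)
    (hinj : Function.Injective ζ) {c : ℤ → ℂ} (hc0 : c 0 = 1) (hconj : ∀ k, c (-k) = conj (c k))
    (N : ℕ) :
    (∃ μ : ι → ℝ, (∀ s, 0 < μ s) ∧ ∀ k : ℤ, |k| ≤ N → c k = ∑ s, (μ s : ℂ) * ζ s ^ (-k)) ↔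
    (∃ p : ℂ[X], p.Monic ∧ p.natDegree = Fintype.card ι - 1 ∧
        (∀ z : ℂ, p.eval z = 0 → ‖z‖ < 1) ∧
        ∃ η : ℂ, ‖η‖ = 1 ∧
          (X * p + C η * pstar (Fintype.card ι - 1) p = ∏ s, (X - C (ζ s))) ∧
          ∃ ε > (0 : ℝ), ∃ K : ℝ, ∀ z : ℂ, ‖z‖ < ε →
            ‖(η * (pstar (Fintype.card ι - 1) p).eval z - z * p.eval z) /
                (η * (pstar (Fintype.card ι - 1) p).eval z + z * p.eval z) -
              (1 + ∑ k ∈ Finset.Icc 1 N, 2 * c k * z ^ k)‖ ≤ K * ‖z‖ ^ (N + 1)) := by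
  classical
  simp_rw [← Lagrange.nodal_eq, exists_bound_near_zero_iff_isBigO]
  have hζ0 (s : ι) : ζ s ≠ 0 := ne_zero_of_norm_ne_zero (by simp [hζ s])
  have hmoments (w : ι → ℝ) : (∀ k : ℤ, |k| ≤ N → c k = ∑ s, (w s : ℂ) * ζ s ^ (-k)) ↔
      ∑ s, (w s : ℂ) = 1 ∧ ∀ k ∈ Finset.Icc 1 N, c k = ∑ s, (w s : ℂ) * ζ s ^ (-(k : ℤ)) := by
    rw [forall_abs_le_eq_iff_of_neg_eq_star hconj (sum_mul_zpow_neg_neg hζ w), hc0]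
    simp [eq_comm]
  constructor
  · rintro ⟨w, hw, hc⟩
    obtain ⟨hsum, hc⟩ := (hmoments w).1 hc
    have hnodal := X_mul_cauchyNumerator_add_pstar hζ (mod_cast hsum)
    have hlead := (coeff_cauchyNumerator (ζ := ζ)).trans hsum
    exact ⟨_, monic_of_natDegree_le_of_coeff_eq_one _ natDegree_cauchyNumerator_le hlead,
      natDegree_eq_of_le_of_coeff_ne_zero natDegree_cauchyNumerator_le (hlead ▸ one_ne_zero),
      fun z => norm_lt_one_of_eval_cauchyNumerator_eq_zero hζ hinj hw, _, by simp [hζ], hnodal,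
      (isBigO_herglotz_sub_iff hζ0 hnodal hsum).2 hc⟩
  · rintro ⟨p, hmonic, hdeg, hroots, η, -, hnodal, hO⟩
    obtain ⟨w, hw, hsum, rfl⟩ :=
      exists_pos_weights_of_roots_lt_one hζ hinj hmonic hdeg hroots hnodal
    have hsum : ∑ s, (w s : ℂ) = 1 := mod_cast hsum
    exact ⟨w, hw, (hmoments w).2 ⟨hsum, (isBigO_herglotz_sub_iff hζ0 hnodal hsum).1 hO⟩⟩

theorem stmt6
    (σ : Measure ℝ) [IsFiniteMeasure σ]
    (hsupp : σ (Set.Icc 0 (2 * π))ᶜ = 0)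
    (hnorm : (1 / (2 * π)) * ∫ _φ, (1 : ℝ) ∂σ = 1)
    (n : ℕ) (hn : 1 ≤ n) (m : ℕ) (hm : m ≤ n - 1)
    (φs : Fin n → ℝ) (hmono : StrictMono φs)
    (hrange : ∀ s, φs s ∈ Set.Ico 0 (2 * π))
    -- the moments of `σ`
    (c : ℤ → ℂ)
    (hc : ∀ k : ℤ, c k =
      (1 / (2 * (π : ℂ))) * ∫ φ : ℝ, Complex.exp (-(k : ℂ) * Complex.I * (φ : ℂ)) ∂σ) :
    -- (a)
    (∃ μ : Fin n → ℝ, (∀ s, 0 < μ s) ∧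
        ∀ k : ℤ, |k| ≤ (n : ℤ) - m - 1 →
          c k = ∑ s, (μ s : ℂ) * Complex.exp (-(k : ℂ) * Complex.I * (φs s : ℂ))) ↔
    -- (d)
    (∃ p : Polynomial ℂ, p.Monic ∧ p.natDegree = n - 1 ∧
        (∀ z : ℂ, p.eval z = 0 → ‖z‖ < 1) ∧
        ∃ η : ℂ, ‖η‖ = 1 ∧
          (X * p + C η * pstar (n - 1) p =
            ∏ s, (X - C (Complex.exp (Complex.I * (φs s : ℂ))))) ∧
          -- `(η p* - z p)/(η p* + z p) = 1 + 2 ∑_{k=1}^{n-m-1} c_k z^k + O(z^{n-m})`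
          ∃ ε > (0 : ℝ), ∃ Cst : ℝ, ∀ z : ℂ, ‖z‖ < ε →
            ‖(η * (pstar (n - 1) p).eval z - z * p.eval z) /
                (η * (pstar (n - 1) p).eval z + z * p.eval z) -
              (1 + ∑ k ∈ Finset.Icc 1 (n - m - 1), 2 * c k * z ^ k)‖ ≤
              Cst * ‖z‖ ^ (n - m)) := by
  obtain ⟨N, rfl⟩ : ∃ N, n = m + (N + 1) := ⟨n - m - 1, by omega⟩
  obtain rfl : c = trigMoment σ := funext hc
  have hgap : ((m + (N + 1) : ℕ) : ℤ) - m - 1 = N := by push_cast; ring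
  simpa only [exp_neg_intCast_mul_I_mul, Fintype.card_fin, hgap, Nat.add_sub_cancel_left,
    Nat.add_sub_cancel] using stmt6_general (ζ := fun s => Complex.exp (Complex.I * φs s))
    (fun s => by rw [mul_comm, Complex.norm_exp_ofReal_mul_I])
    (fun s t h => hmono.injective (injOn_exp_I_mul_Ico (hrange s) (hrange t) h))
    (by rw [trigMoment_zero, hnorm, Complex.ofReal_one]) trigMoment_neg N
end

section
/- Let l, m ∈ ℕ₀ with m ≤ l ≤ n−1 and κ ∈ 𝕋. Suppose T_n(z) = ∏_{s=1}^n (z − e^{iφ_s}), 0 ≤ φ₁ < ⋯ < φ_n < 2π, is the nodes polynomial of a positive (n−1−m, n, dσ) quadrature formula, and write T_n = z q_l Φ_{n−1−l} + η q_l* Φ*_{n−1−l} with q_l monic of degree l having all zeros in the open unit disk and η ∈ 𝕋 (such a representation exists by the characterization theorem). Then every common zero of T_n and of the para-orthogonal polynomial z Φ_{n−1−l} + κ Φ*_{n−1−l} is a zero of κ q_l(z) − η q_l*(z). -/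
/-!
Let `Φ = Φ_{n-1-l}`. At a common zero `z`, eliminating `z Φ(z) = -κ Φ*(z)` from `T_n(z) = 0` gives
`Φ*(z) (κ q(z) - η q*(z)) = 0`, so `Φ*(z) ≠ 0` is enough. Zeros of `T_n` lie on the unit circle,
where `|Φ*| = |Φ|`; hence it remains to see that `Φ` has no zero on the circle.

Suppose `Φ = (X - ζ) p` with `|ζ| = 1`. As `Φ` is orthogonal to `p`, Pythagoras gives
`‖p‖² = ‖X p‖² = ‖Φ + ζ p‖² = ‖Φ‖² + ‖p‖²` in `L²(σ)`, so `‖Φ‖ = 0`. The quadrature formula is exact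
for `|Φ|²`, because `deg Φ ≤ n - 1 - m`; its weights being positive, `Φ` vanishes at all `n > deg Φ`
nodes, which is absurd.
-/

open MeasureTheory Real Polynomial

open scoped ComplexConjugate

theorem conj_eval_circle (P : ℂ[X]) (z : Circle) :
    conj (P.eval (z : ℂ)) =
      ∑ i ∈ Finset.range (P.natDegree + 1), conj (P.coeff i) * (z : ℂ) ^ (-(i : ℤ)) := by
  simp only [eval_eq_sum_range, map_sum, map_mul, map_pow, ← Circle.coe_inv_eq_conj,
    Circle.coe_inv, zpow_neg, zpow_natCast, inv_pow]

theorem conj_eval_mul_eval_circle (P Q : ℂ[X]) (z : Circle) :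
    conj (P.eval (z : ℂ)) * Q.eval (z : ℂ) =
      ∑ x ∈ Finset.range (P.natDegree + 1) ×ˢ Finset.range (Q.natDegree + 1),
        conj (P.coeff x.1) * Q.coeff x.2 * (z : ℂ) ^ (-((x.1 : ℤ) - x.2)) := by
  rw [conj_eval_circle, eval_eq_sum_range, Finset.sum_mul_sum, Finset.sum_product]
  refine Finset.sum_congr rfl fun i _ => Finset.sum_congr rfl fun j _ => ?_
  rw [neg_sub, sub_eq_neg_add, zpow_add₀ z.coe_ne_zero, zpow_natCast]
  ring

theorem pstar_eval_circle {N : ℕ} {P : ℂ[X]} (hP : P.natDegree ≤ N) (z : Circle) :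
    (pstar N P).eval (z : ℂ) = (z : ℂ) ^ N * conj (P.eval (z : ℂ)) := by
  let _ : Invertible (conj (z : ℂ)) := invertibleOfNonzero (by simp)
  have hinv : (conj (z : ℂ))⁻¹ = z := by rw [← Circle.coe_inv_eq_conj, Circle.coe_inv, inv_inv]
  have hreflect : (pstar N P).eval (z : ℂ) * conj (z : ℂ) ^ N = conj (P.eval (z : ℂ)) := by
    simpa [pstar, eval_map, eval₂_at_apply, hinv] using
      eval₂_reflect_mul_pow (RingHom.id ℂ) (conj (z : ℂ)) N (P.map (starRingEnd ℂ))
        (natDegree_map_le.trans hP)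
  rw [← hreflect, mul_left_comm, ← mul_pow, Complex.mul_conj]
  simp

theorem pstar_eval_circle_eq_zero_iff {N : ℕ} {P : ℂ[X]} (hP : P.natDegree ≤ N) (z : Circle) :
    (pstar N P).eval (z : ℂ) = 0 ↔ P.eval (z : ℂ) = 0 := by
  simp [pstar_eval_circle hP]

/-- `P` is orthogonal to `1, z, …, z ^ (deg P - 1)` in `L²` of the image of `σ` under `u`; a monic
such `P` is the orthogonal polynomial of its degree. Mathlib has no measurable structure on
`Circle`, so a measure on the circle is encoded by a measure `σ` on some `Ω` and a map `u` from `Ω`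
to the circle. The factor `u ^ (-j)` is the conjugate of `u ^ j`. -/
def IsOrthogonalPoly {Ω : Type*} [MeasurableSpace Ω] (σ : Measure Ω) (u : Ω → Circle)
    (P : ℂ[X]) : Prop :=
  ∀ j < P.natDegree, ∫ x, (u x : ℂ) ^ (-(j : ℤ)) * P.eval (u x : ℂ) ∂σ = 0

/-- The quadrature formula with nodes `w` and weights `μ` is exact for the trigonometric monomials
`z ^ (-k)`, `|k| ≤ M`, with respect to the image of `σ` under `u`. -/
def IsExactQuadrature {Ω : Type*} [MeasurableSpace Ω] (σ : Measure Ω) (u : Ω → Circle) (M : ℕ)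
    {ι : Type*} [Fintype ι] (w : ι → Circle) (μ : ι → ℝ) : Prop :=
  ∀ k : ℤ, |k| ≤ M → ∫ x, (u x : ℂ) ^ (-k) ∂σ = ∑ s, (μ s : ℂ) * (w s : ℂ) ^ (-k)

section Circle

variable {Ω : Type*} [MeasurableSpace Ω] {σ : Measure Ω} [IsFiniteMeasure σ] {u : Ω → Circle}

theorem integrable_continuous_comp_circle (hu : AEStronglyMeasurable u σ) {f : Circle → ℂ}
    (hf : Continuous f) : Integrable (fun x => f (u x)) σ :=
  .of_bound (hf.comp_aestronglyMeasurable hu) ‖BoundedContinuousFunction.mkOfCompact ⟨f, hf⟩‖ <|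
    .of_forall fun x => (BoundedContinuousFunction.mkOfCompact ⟨f, hf⟩).norm_coe_le_norm (u x)

theorem continuous_circle_zpow (k : ℤ) : Continuous fun z : Circle => (z : ℂ) ^ k :=
  (continuous_subtype_val : Continuous ((↑) : Circle → ℂ)).zpow₀ k
    fun z => .inl (Circle.coe_ne_zero z)

theorem continuous_eval_circle (P : ℂ[X]) : Continuous fun z : Circle => P.eval (z : ℂ) :=
  P.continuous.comp continuous_subtype_val

theorem IsOrthogonalPoly.integral_conj_eval_mul_eval_eq_zero {P Q : ℂ[X]}
    (hP : IsOrthogonalPoly σ u P) (hu : AEStronglyMeasurable u σ) (hQ : Q.natDegree < P.natDegree) :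
    ∫ x, conj (Q.eval (u x : ℂ)) * P.eval (u x : ℂ) ∂σ = 0 := by
  have hint (j : ℕ) : Integrable (fun x => (u x : ℂ) ^ (-(j : ℤ)) * P.eval (u x : ℂ)) σ :=
    integrable_continuous_comp_circle hu
      ((continuous_circle_zpow _).mul (continuous_eval_circle P))
  simp only [conj_eval_circle, Finset.sum_mul, mul_assoc]
  rw [integral_finsetSum _ fun j _ => (hint j).const_mul _]
  refine Finset.sum_eq_zero fun j hj => ?_
  rw [integral_const_mul, hP j (by grind), mul_zero]

theorem norm_sq_eval_circle_of_eq_X_sub_C_mul {P Q : ℂ[X]} {ζ : Circle}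
    (hPQ : P = (X - C (ζ : ℂ)) * Q) (z : Circle) :
    ‖P.eval (z : ℂ)‖ ^ 2 =
      -2 * (conj (ζ : ℂ) * (conj (Q.eval (z : ℂ)) * P.eval (z : ℂ))).re := by
  have hz : (z : ℂ) * conj (z : ℂ) = 1 := by simp [Complex.mul_conj]
  have hζ : (ζ : ℂ) * conj (ζ : ℂ) = 1 := by simp [Complex.mul_conj]
  apply Complex.ofReal_injective
  simp only [Complex.ofReal_pow, ← Complex.conj_mul', neg_mul, Complex.ofReal_neg,
    ← Complex.add_conj]
  simp only [hPQ, eval_mul, eval_sub, eval_X, eval_C, map_mul, map_sub, Complex.conj_conj]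
  linear_combination (Q.eval (z : ℂ) * conj (Q.eval (z : ℂ))) * (hz - hζ)

theorem IsOrthogonalPoly.integral_norm_sq_eval_eq_zero {P : ℂ[X]} (hP : IsOrthogonalPoly σ u P)
    (hu : AEStronglyMeasurable u σ) (hP0 : P ≠ 0) {ζ : Circle} (hζ : P.eval (ζ : ℂ) = 0) :
    ∫ x, ‖P.eval (u x : ℂ)‖ ^ 2 ∂σ = 0 := by
  obtain ⟨Q, hPQ⟩ := dvd_iff_isRoot.mpr hζ
  have hdeg : Q.natDegree < P.natDegree := by
    rw [hPQ, natDegree_mul (X_sub_C_ne_zero _) (right_ne_zero_of_mul (hPQ ▸ hP0)),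
      natDegree_X_sub_C]
    lia
  have hint : Integrable (fun x => conj (ζ : ℂ) * (conj (Q.eval (u x : ℂ)) * P.eval (u x : ℂ))) σ :=
    (integrable_continuous_comp_circle hu ((Complex.continuous_conj.comp
      (continuous_eval_circle Q)).mul (continuous_eval_circle P))).const_mul _
  have hcross : ∫ x, conj (ζ : ℂ) * (conj (Q.eval (u x : ℂ)) * P.eval (u x : ℂ)) ∂σ = 0 := by
    rw [integral_const_mul, hP.integral_conj_eval_mul_eval_eq_zero hu hdeg, mul_zero]
  have hre : ∫ x, (conj (ζ : ℂ) * (conj (Q.eval (u x : ℂ)) * P.eval (u x : ℂ))).re ∂σ = 0 :=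
    (integral_re hint).trans (by rw [hcross, map_zero])
  simp only [norm_sq_eval_circle_of_eq_X_sub_C_mul hPQ]
  rw [integral_const_mul, hre, mul_zero]

variable {ι : Type*} [Fintype ι] {w : ι → Circle} {μ : ι → ℝ} {M : ℕ}

theorem IsExactQuadrature.integral_conj_eval_mul_eval (hquad : IsExactQuadrature σ u M w μ)
    (hu : AEStronglyMeasurable u σ) {P Q : ℂ[X]} (hP : P.natDegree ≤ M) (hQ : Q.natDegree ≤ M) :
    ∫ x, conj (P.eval (u x : ℂ)) * Q.eval (u x : ℂ) ∂σ =
      ∑ s, (μ s : ℂ) * (conj (P.eval (w s : ℂ)) * Q.eval (w s : ℂ)) := by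
  simp only [conj_eval_mul_eval_circle, Finset.mul_sum]
  rw [Finset.sum_comm, integral_finsetSum _ fun x _ =>
    (integrable_continuous_comp_circle hu (continuous_circle_zpow _)).const_mul _]
  refine Finset.sum_congr rfl fun x hx => ?_
  have hx' : |(x.1 : ℤ) - x.2| ≤ M := by
    simp only [Finset.mem_product, Finset.mem_range] at hx
    exact abs_le.mpr ⟨by lia, by lia⟩
  rw [integral_const_mul, hquad _ hx', Finset.mul_sum]
  exact Finset.sum_congr rfl fun s _ => mul_left_comm _ _ _

theorem IsExactQuadrature.integral_norm_sq_eval (hquad : IsExactQuadrature σ u M w μ)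
    (hu : AEStronglyMeasurable u σ) {P : ℂ[X]} (hP : P.natDegree ≤ M) :
    ∫ x, ‖P.eval (u x : ℂ)‖ ^ 2 ∂σ = ∑ s, μ s * ‖P.eval (w s : ℂ)‖ ^ 2 := by
  apply Complex.ofReal_injective
  rw [← integral_complex_ofReal]
  push_cast
  simpa only [Complex.conj_mul'] using hquad.integral_conj_eval_mul_eval hu hP hP

theorem IsExactQuadrature.eval_node_eq_zero (hquad : IsExactQuadrature σ u M w μ)
    (hu : AEStronglyMeasurable u σ) (hμ : ∀ s, 0 < μ s) {P : ℂ[X]} (hP : P.natDegree ≤ M)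
    (hnorm : ∫ x, ‖P.eval (u x : ℂ)‖ ^ 2 ∂σ = 0) (s : ι) :
    P.eval (w s : ℂ) = 0 := by
  rw [hquad.integral_norm_sq_eval hu hP] at hnorm
  have hnonneg (t : ι) : 0 ≤ μ t * ‖P.eval (w t : ℂ)‖ ^ 2 :=
    mul_nonneg (hμ t).le (sq_nonneg _)
  have hterm : μ s * ‖P.eval (w s : ℂ)‖ ^ 2 = 0 :=
    (Finset.sum_eq_zero_iff_of_nonneg fun t _ => hnonneg t).mp hnorm s (Finset.mem_univ s)
  simpa [(hμ s).ne'] using hterm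

theorem IsOrthogonalPoly.eval_circle_ne_zero {P : ℂ[X]} (hP : IsOrthogonalPoly σ u P)
    (hu : AEStronglyMeasurable u σ) (hP0 : P ≠ 0) (hquad : IsExactQuadrature σ u M w μ)
    (hμ : ∀ s, 0 < μ s) (hw : Function.Injective w) (hdeg : P.natDegree ≤ M)
    (hcard : P.natDegree < Fintype.card ι) (ζ : Circle) : P.eval (ζ : ℂ) ≠ 0 := fun hζ =>
  hP0 <| eq_zero_of_natDegree_lt_card_of_eval_eq_zero P (Circle.coe_injective.comp hw)
    (hquad.eval_node_eq_zero hu hμ hdeg (hP.integral_norm_sq_eval_eq_zero hu hP0 hζ)) hcard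

end Circle

theorem circle_exp_zpow_neg (k : ℤ) (φ : ℝ) :
    (Circle.exp φ : ℂ) ^ (-k) = Complex.exp (-(k : ℂ) * Complex.I * φ) := by
  rw [Circle.coe_exp, ← Complex.exp_int_mul]
  push_cast
  ring_nf

theorem circle_exp_eq_exp_I_mul (φ : ℝ) : (Circle.exp φ : ℂ) = Complex.exp (Complex.I * φ) := by
  rw [Circle.coe_exp, mul_comm]

theorem isOrthogonalPoly_circle_exp_iff {σ : Measure ℝ} {P : ℂ[X]} :
    IsOrthogonalPoly σ Circle.exp P ↔ ∀ j < P.natDegree,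
      ∫ φ : ℝ, Complex.exp (-(j : ℂ) * Complex.I * (φ : ℂ)) *
        P.eval (Complex.exp (Complex.I * (φ : ℂ))) ∂σ = 0 := by
  simp only [IsOrthogonalPoly, circle_exp_zpow_neg, Int.cast_natCast]
  simp only [circle_exp_eq_exp_I_mul]

theorem isExactQuadrature_circle_exp {σ : Measure ℝ} {M : ℕ} {ι : Type*} [Fintype ι]
    {φs : ι → ℝ} {μ : ι → ℝ}
    (hquad : ∀ k : ℤ, |k| ≤ M →
      (1 / (2 * (π : ℂ))) * ∫ φ : ℝ, Complex.exp (-(k : ℂ) * Complex.I * (φ : ℂ)) ∂σ =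
        ∑ s, (μ s : ℂ) * Complex.exp (-(k : ℂ) * Complex.I * (φs s : ℂ))) :
    IsExactQuadrature σ Circle.exp M (fun s => Circle.exp (φs s)) (fun s => 2 * π * μ s) := by
  intro k hk
  have hpi : (π : ℂ) ≠ 0 := Complex.ofReal_ne_zero.mpr pi_ne_zero
  simp only [circle_exp_zpow_neg, Complex.ofReal_mul, mul_assoc _ (Complex.ofReal (μ _)),
    ← Finset.mul_sum, ← hquad k hk]
  simp only [Complex.ofReal_ofNat]
  field_simp

theorem exists_circle_eq_of_eval_prod_X_sub_C_eq_zero {ι : Type*} [Fintype ι] {φs : ι → ℝ} {z : ℂ}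
    (hz : (∏ s, (X - C (Complex.exp (Complex.I * (φs s : ℂ))))).eval z = 0) :
    ∃ ζ : Circle, (ζ : ℂ) = z := by
  rw [eval_prod, Finset.prod_eq_zero_iff] at hz
  obtain ⟨s, -, hs⟩ := hz
  rw [eval_sub, eval_X, eval_C, sub_eq_zero] at hs
  exact ⟨Circle.exp (φs s), (circle_exp_eq_exp_I_mul _).trans hs.symm⟩

theorem stmt12_general {σ : Measure ℝ} [IsFiniteMeasure σ] {P : ℂ[X]} (hP0 : P ≠ 0) {N : ℕ}
    (hdeg : P.natDegree = N)
    (horth : ∀ j < N, ∫ φ : ℝ, Complex.exp (-(j : ℂ) * Complex.I * (φ : ℂ)) *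
      P.eval (Complex.exp (Complex.I * (φ : ℂ))) ∂σ = 0)
    {ι : Type*} [Fintype ι] (hN : N < Fintype.card ι)
    {φs : ι → ℝ} (hφs : Function.Injective fun s => Circle.exp (φs s))
    {μw : ι → ℝ} (hμpos : ∀ s, 0 < μw s)
    (hquad : ∀ k : ℤ, |k| ≤ N →
      (1 / (2 * (π : ℂ))) * ∫ φ : ℝ, Complex.exp (-(k : ℂ) * Complex.I * (φ : ℂ)) ∂σ =
        ∑ s, (μw s : ℂ) * Complex.exp (-(k : ℂ) * Complex.I * (φs s : ℂ)))
    {T q r : ℂ[X]} (hT : T = ∏ s, (X - C (Complex.exp (Complex.I * (φs s : ℂ)))))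
    (hrep : T = X * q * P + r * pstar N P) {κ z : ℂ} (hTz : T.eval z = 0)
    (hpara : (X * P + C κ * pstar N P).eval z = 0) :
    κ * q.eval z - r.eval z = 0 := by
  subst hdeg
  obtain ⟨ζ, rfl⟩ := exists_circle_eq_of_eval_prod_X_sub_C_eq_zero (hT ▸ hTz)
  have hPζ : P.eval (ζ : ℂ) ≠ 0 :=
    (isOrthogonalPoly_circle_exp_iff.mpr horth).eval_circle_ne_zero
      Circle.exp.continuous.aestronglyMeasurable hP0
      (isExactQuadrature_circle_exp hquad)
      (fun s => mul_pos two_pi_pos (hμpos s)) hφs le_rfl hN ζ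
  have hstar : (pstar P.natDegree P).eval (ζ : ℂ) ≠ 0 :=
    (pstar_eval_circle_eq_zero_iff le_rfl ζ).not.mpr hPζ
  have helim : (pstar P.natDegree P).eval (ζ : ℂ) * (κ * q.eval (ζ : ℂ) - r.eval (ζ : ℂ)) = 0 := by
    rw [hrep] at hTz
    simp only [eval_add, eval_mul, eval_X, eval_C] at hTz hpara
    linear_combination q.eval (ζ : ℂ) * hpara - hTz
  exact (mul_eq_zero.mp helim).resolve_left hstar

theorem stmt12
    (σ : Measure ℝ) [IsFiniteMeasure σ]
    (hsupp : σ (Set.Icc 0 (2 * π))ᶜ = 0)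
    (hnorm : (1 / (2 * π)) * ∫ _φ, (1 : ℝ) ∂σ = 1)
    -- the orthogonal polynomials `Φ`
    (Φ : ℕ → Polynomial ℂ) (hΦ0 : Φ 0 = 1)
    (hΦmonic : ∀ k, (Φ k).Monic) (hΦdeg : ∀ k, (Φ k).natDegree = k)
    (hΦorth : ∀ k : ℕ, ∀ j < k,
      ∫ φ : ℝ, Complex.exp (-(j : ℂ) * Complex.I * (φ : ℂ)) *
        (Φ k).eval (Complex.exp (Complex.I * (φ : ℂ))) ∂σ = 0)
    (n : ℕ) (hn : 1 ≤ n) (l m : ℕ) (hml : m ≤ l) (hl : l ≤ n - 1)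
    (κ : ℂ) (hκ : ‖κ‖ = 1)
    -- the nodes of a positive `(n-1-m, n, dσ)` quadrature formula
    (φs : Fin n → ℝ) (hmono : StrictMono φs)
    (hrange : ∀ s, φs s ∈ Set.Ico 0 (2 * π))
    (μw : Fin n → ℝ) (hμpos : ∀ s, 0 < μw s)
    (hquad : ∀ k : ℤ, |k| ≤ (n : ℤ) - 1 - m →
      (1 / (2 * (π : ℂ))) * ∫ φ : ℝ, Complex.exp (-(k : ℂ) * Complex.I * (φ : ℂ)) ∂σ =
        ∑ s, (μw s : ℂ) * Complex.exp (-(k : ℂ) * Complex.I * (φs s : ℂ)))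
    -- the nodes polynomial and its representation
    (Tn : Polynomial ℂ)
    (hTn : Tn = ∏ s, (X - C (Complex.exp (Complex.I * (φs s : ℂ)))))
    (q : Polynomial ℂ) (hqmonic : q.Monic) (hqdeg : q.natDegree = l)
    (hqzeros : ∀ z : ℂ, q.eval z = 0 → ‖z‖ < 1)
    (η : ℂ) (hη : ‖η‖ = 1)
    (hrep : Tn = X * q * Φ (n - 1 - l) +
      C η * pstar l q * pstar (n - 1 - l) (Φ (n - 1 - l))) :
    -- every common zero of `Tn` and the para-orthogonal polynomial is a zero
    -- of `κ q_l - η q_l*`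
    ∀ z : ℂ, Tn.eval z = 0 →
      (X * Φ (n - 1 - l) + C κ * pstar (n - 1 - l) (Φ (n - 1 - l))).eval z = 0 →
      κ * q.eval z - η * (pstar l q).eval z = 0 :=
  fun z hTz hpara => by
    simpa using stmt12_general (hΦmonic _).ne_zero (hΦdeg _) (hΦorth _) (by simpa using by lia)
      (fun _ _ h => hmono.injective (Circle.exp_injOn_Ico (by simp) (hrange _) (hrange _) h))
      hμpos (fun k hk => hquad k (by lia)) hTn hrep hTz hpara
end
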